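/- Let K be a finite n-dimensional simplicial complex embedded in Euclidean space, with n ≥ 2, let L be a subdivision of K, and let τ^s be an s-simplex of L whose open simplex is contained in the open p-simplex ζ^p of K. Then a_p·K_a(τ^s) = a_s·K_a(ζ^p), where K_a(τ^s) is computed in L and K_a(ζ^p) is computed in K. In particular, if s = p then K_a(τ^p) = K_a(ζ^p). -/

import Mathlib

open Filter MeasureTheory Geometry
open scoped BigOperators

noncomputable section

attribute [local instance 0] Classical.propDecidable

namespace AngleDefectPaper

/-- `N`-dimensional Euclidean space. -/
abbrev Euc (N : ℕ) : Type := EuclideanSpace ℝ (Fin N)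

variable {N : ℕ}

/-- The open simplex determined by a finite set of points: the intrinsic
(relative) interior of its convex hull. -/
def openSimplex (s : Finset (Euc N)) : Set (Euc N) :=
  intrinsicInterior ℝ (convexHull ℝ (s : Set (Euc N)))

/-- The normalized solid angle `α(η, σ)` of the simplex `σ` along its face `η`:
the fraction of a small sphere (in the affine span of `σ`) centered at a point of
the open face `η` that lies in `σ`, normalized so that the full sphere has
measure `1`.  It is computed as the limiting fraction of a small ambient ball
centered at the centroid of `η` that lies in the cylinder obtained by thickening
`σ` in the directions orthogonal to its affine span. -/
def solidAngle (η σ : Finset (Euc N)) : ℝ :=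
  limUnder (nhdsWithin (0 : ℝ) (Set.Ioi 0)) fun ε =>
    (volume (Metric.ball (η.centroid ℝ id) ε ∩
      {y : Euc N | ∃ c ∈ convexHull ℝ (σ : Set (Euc N)),
        ∃ w ∈ (vectorSpan ℝ (σ : Set (Euc N)))ᗮ, y = c + w})).toReal /
    (volume (Metric.ball (η.centroid ℝ id) ε)).toReal

/-- `Tcone r` is (a realization in the plane of) the open cone on `r` points:
`r` half-open segments emanating from the origin in pairwise distinct
directions, glued at the origin.  For `r = 0` it is a single point. -/
def Tcone (r : ℕ) : Set (ℝ × ℝ) :=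
  {0} ∪ ⋃ k ∈ Finset.range r,
    {p : ℝ × ℝ | ∃ t : ℝ, 0 ≤ t ∧ t < 1 ∧ p = t • ((1 : ℝ), (k : ℝ))}

/-- `x` has a neighborhood in `S` homeomorphic to `T_r × ℝ^{n-1}`, with the
homeomorphism taking `x` into the apex set `{cone point} × ℝ^{n-1}`. -/
def HasConeNbhd (n r : ℕ) (S : Set (Euc N)) (x : Euc N) : Prop :=
  ∃ U : Set (Euc N), U ∈ nhdsWithin x S ∧ U ⊆ S ∧
    ∃ h : U ≃ₜ (Tcone r) × EuclideanSpace ℝ (Fin (n - 1)),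
      ∀ hx : x ∈ U, ((h ⟨x, hx⟩).1 : ℝ × ℝ) = 0

/-- The set of points of `|K|` having a neighborhood of cone type `r`. -/
def csetAux (n : ℕ) (K : SimplicialComplex ℝ (Euc N)) (r : ℕ) : Set (Euc N) :=
  {x | x ∈ K.space ∧ HasConeNbhd n r K.space x}

/-- The sets `C_r(K)`: for `r ≠ 2` the points with a cone-type-`r` neighborhood,
and `C_2(K)` is the complement in `|K|` of the union of the others. -/
def cset (n : ℕ) (K : SimplicialComplex ℝ (Euc N)) (r : ℕ) : Set (Euc N) :=
  if r = 2 then K.space \ ⋃ r' ∈ {r' : ℕ | r' ≠ 2}, csetAux n K r'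
  else csetAux n K r

/-- The stratification rank `r(η) = r/2`, where `C_r(K)` is the (unique) set of
the stratification containing the open simplex of `η`. -/
def strRank (n : ℕ) (K : SimplicialComplex ℝ (Euc N)) (η : Finset (Euc N)) : ℝ :=
  if h : ∃ r : ℕ, r ≠ 2 ∧ openSimplex η ⊆ csetAux n K r then (h.choose : ℝ) / 2
  else 1

/-- The set of `n`-simplices of `K` having `η` as a face. -/
def nSimplicesOn (n : ℕ) (K : SimplicialComplex ℝ (Euc N)) (η : Finset (Euc N)) :
    Set (Finset (Euc N)) :=
  {σ | σ ∈ K.faces ∧ σ.card = n + 1 ∧ η ⊆ σ}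

/-- The generalized angle defect `D(η) = r(η) - Σ_{σⁿ ≻ η} α(η, σⁿ)`. -/
def defect (n : ℕ) (K : SimplicialComplex ℝ (Euc N)) (η : Finset (Euc N)) : ℝ :=
  strRank n K η - ∑ᶠ σ ∈ nSimplicesOn n K η, solidAngle η σ

/-- The angle defect sequence `a_m = 4 B_{m+2} (2^{m+2} - 1)/(m+2)`, where `B_k`
is the `k`-th Bernoulli number (with the convention `B_1 = -1/2`). -/
def ads (m : ℕ) : ℚ :=
  4 * bernoulli (m + 2) * (2 ^ (m + 2) - 1) / (m + 2)

/-- The ascending stratified curvature of a simplex `τ` (of dimension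
`p = τ.card - 1`) in the `n`-dimensional complex `K`. -/
def asc (n : ℕ) (K : SimplicialComplex ℝ (Euc N)) (τ : Finset (Euc N)) : ℝ :=
  (ads (τ.card - 1) : ℝ) * defect n K τ +
    (ads (τ.card - 1) : ℝ) / 2 *
      ∑ i ∈ Finset.Icc τ.card n,
        (-1 : ℝ) ^ (i - (τ.card - 1)) *
          ∑ᶠ η ∈ {η : Finset (Euc N) | η ∈ K.faces ∧ η.card = i + 1 ∧ τ ⊆ η},
            defect n K η

/-- The stratified Euler characteristic `χˢ(K) = Σ_{η ∈ K} r(η) (-1)^{dim η}`. -/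
def stratEuler (n : ℕ) (K : SimplicialComplex ℝ (Euc N)) : ℝ :=
  ∑ᶠ η ∈ K.faces, strRank n K η * (-1 : ℝ) ^ (η.card - 1)

/-- `fcount F k` is the number of `k`-dimensional simplices in `F`. -/
def fcount (F : Set (Finset (Euc N))) (k : ℕ) : ℕ :=
  {s ∈ F | s.card = k + 1}.ncard

/-- The combinatorial Euler characteristic `χ(F) = Σ_k (-1)^k f_k(F)`. -/
def eulerChar (F : Set (Finset (Euc N))) : ℤ :=
  ∑ᶠ k : ℕ, (-1 : ℤ) ^ k * fcount F k

/-- The link of `η` in `K`: all simplices `ω` of `K` disjoint from `η` such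
that the join `η ∗ ω` is a simplex of `K`. -/
def linkFaces (K : SimplicialComplex ℝ (Euc N)) (η : Finset (Euc N)) :
    Set (Finset (Euc N)) :=
  {ω | ω ∈ K.faces ∧ Disjoint η ω ∧ η ∪ ω ∈ K.faces}

/-- `K` is an `n`-dimensional simplicial complex. -/
def IsNDim (n : ℕ) (K : SimplicialComplex ℝ (Euc N)) : Prop :=
  (∀ s ∈ K.faces, s.card ≤ n + 1) ∧ ∃ s ∈ K.faces, s.card = n + 1

/-- `L` is a subdivision of `K`: same underlying space, and every open simplex
of `L` is contained in an open simplex of `K`. -/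
def IsSubdivision (K L : SimplicialComplex ℝ (Euc N)) : Prop :=
  L.space = K.space ∧ ∀ s ∈ L.faces, ∃ t ∈ K.faces, openSimplex s ⊆ openSimplex t

/-!
The ascending curvature of a `p`-simplex is `a_p` times a factor depending only on three invariants
of its open star and on the parity of `p`: the stratification rank, the Euler characteristic of the
star weighted by stratification ranks, and the total solid angle along the simplex. To see this,
write each defect as rank minus total angle and use that, for `τ ⊆ σ`, the alternating sum of
`α(η, σ)` over `τ ⊆ η ⊆ σ` is `± α(τ, σ)`; this is inclusion–exclusion for the facet half-spaces of
the cone of `σ` along `τ`, combined with the symmetry `v ↦ -v` of the ball.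

The three invariants do not change under subdivision. The rank is the local homeomorphism type of
the space. A small ball around a point of `τ` meets each open simplex `ρ` of the star of `ζ` in a
convex set, relatively open in the span of `ρ`, which is cut into its intersections with the open
simplices of the star of `τ`. Additivity of the Euler characteristic on relatively open convex sets
gives the second invariant, and additivity of volume gives the third.

If `s` and `p` have the same parity the factors agree; otherwise `a_s` or `a_p` is zero, since the
Bernoulli numbers of odd index greater than one vanish.
-/

section BarycentricCoordinates

variable {E : Type*} [NormedAddCommGroup E] [InnerProductSpace ℝ E]

/-- A nondegenerate simplex, given by its finite nonempty affinely independent vertex set. -/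
structure IsSimplex (s : Finset E) : Prop where
  nonempty : s.Nonempty
  affineIndependent : AffineIndependent ℝ ((↑) : s → E)

/-- The barycentric coordinate of the simplex `s` at its vertex `v`, extended from the affine span
of `s` to an affine function on the ambient space that is constant in the directions orthogonal to
`s`. It is a junk value if no such function exists. -/
def baryCoord (s : Finset E) (v : E) : E →ᵃ[ℝ] ℝ :=
  Classical.epsilon fun f ↦ (∀ u ∈ s, f u = if u = v then 1 else 0) ∧
    ∀ w ∈ (vectorSpan ℝ (s : Set E))ᗮ, f.linear w = 0

lemma baryCoord_eq_linear_sub_add (s : Finset E) (v x y : E) :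
    baryCoord s v y = (baryCoord s v).linear (y - x) + baryCoord s v x := by
  simpa using (baryCoord s v).map_vadd x (y - x)

lemma continuous_baryCoord [FiniteDimensional ℝ E] (s : Finset E) (v : E) :
    Continuous (baryCoord s v) :=
  (baryCoord s v).continuous_of_finiteDimensional

namespace IsSimplex

variable {s t : Finset E} {u v w x y : E}

lemma mono (hs : IsSimplex s) (ht : t.Nonempty) (hts : t ⊆ s) : IsSimplex t :=
  ⟨ht, hs.affineIndependent.mono (by exact_mod_cast hts)⟩

lemma finrank_vectorSpan_add_one (hs : IsSimplex s) :
    Module.finrank ℝ (vectorSpan ℝ (s : Set E)) + 1 = s.card := by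
  have := hs.nonempty.coe_sort
  have hrange : Set.range ((↑) : s → E) = s := Subtype.range_coe
  rw [← hrange, hs.affineIndependent.finrank_vectorSpan_add_one, Fintype.card_coe]

lemma nonempty_affineSpan (hs : IsSimplex s) : Nonempty (affineSpan ℝ (s : Set E)) :=
  ((Finset.coe_nonempty.2 hs.nonempty).affineSpan ℝ).to_subtype

variable [FiniteDimensional ℝ E]

lemma baryCoord_spec (hs : IsSimplex s) (hv : v ∈ s) :
    (∀ u ∈ s, baryCoord s v u = if u = v then 1 else 0) ∧
      ∀ w ∈ (vectorSpan ℝ (s : Set E))ᗮ, (baryCoord s v).linear w = 0 := by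
  obtain ⟨t, hst, ht, ht_top⟩ := exists_subset_affineIndependent_affineSpan_eq_top
    (k := ℝ) (s := (s : Set E)) hs.affineIndependent
  let b : AffineBasis t ℝ E := ⟨((↑) : t → E), ht, by simpa using ht_top⟩
  let P := (vectorSpan ℝ (s : Set E)).starProjection
  let L := (b.coord ⟨v, hst hv⟩).linear
  have hL (u) (hu : u ∈ s) : L (P (u - v)) = (if u = v then 1 else 0) - 1 := by
    have hP : P (u - v) = u - v :=
      Submodule.starProjection_eq_self_iff.2 (vsub_mem_vectorSpan ℝ hu hv)
    let i : t := ⟨v, hst hv⟩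
    calc L (P (u - v)) = b.coord i (b ⟨u, hst hu⟩) - b.coord i (b i) := by
          rw [hP]; exact AffineMap.linearMap_vsub _ _ _
      _ = (if u = v then 1 else 0) - 1 := by simp [i, AffineBasis.coord_apply, eq_comm]
  refine Classical.epsilon_spec (p := fun f : E →ᵃ[ℝ] ℝ ↦
    (∀ u ∈ s, f u = if u = v then 1 else 0) ∧ ∀ w ∈ (vectorSpan ℝ (s : Set E))ᗮ, f.linear w = 0)
    ⟨(L ∘ₗ P.toLinearMap).toAffineMap + AffineMap.const ℝ E (1 - L (P v)), fun u hu ↦ ?_,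
      fun w hw ↦ ?_⟩
  · have := hL u hu
    rw [map_sub, map_sub] at this
    simp only [AffineMap.coe_add, Pi.add_apply, LinearMap.coe_toAffineMap, LinearMap.comp_apply,
      ContinuousLinearMap.coe_coe, AffineMap.const_apply]
    linarith
  · have hPw : P w = 0 := Submodule.starProjection_apply_eq_zero_iff _ |>.2 hw
    simp [hPw]

lemma baryCoord_vertex (hs : IsSimplex s) (hv : v ∈ s) (hu : u ∈ s) :
    baryCoord s v u = if u = v then 1 else 0 :=
  (hs.baryCoord_spec hv).1 u hu

lemma baryCoord_add_orthogonal (hs : IsSimplex s) (hv : v ∈ s)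
    (hw : w ∈ (vectorSpan ℝ (s : Set E))ᗮ) : baryCoord s v (x + w) = baryCoord s v x := by
  rw [baryCoord_eq_linear_sub_add s v x, add_sub_cancel_left, (hs.baryCoord_spec hv).2 w hw,
    zero_add]

lemma sum_baryCoord_and_sum_smul (hs : IsSimplex s) (hx : x ∈ affineSpan ℝ (s : Set E)) :
    ∑ v ∈ s, baryCoord s v x = 1 ∧ ∑ v ∈ s, baryCoord s v x • v = x := by
  refine affineSpan_induction
    (p := fun x ↦ ∑ v ∈ s, baryCoord s v x = 1 ∧ ∑ v ∈ s, baryCoord s v x • v = x) hx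
    (fun x hx ↦ ?_) fun c x y z hx hy hz ↦ ?_
  · have hx : x ∈ s := hx
    have hcoord (v) (hv : v ∈ s) := hs.baryCoord_vertex hv hx
    constructor
    · rw [Finset.sum_congr rfl hcoord]; simp [hx]
    · rw [Finset.sum_congr rfl fun v hv ↦ by rw [hcoord v hv]]; simp [hx]
  · have hcoord (v) : baryCoord s v (c • (x -ᵥ y) +ᵥ z) =
        c * (baryCoord s v x - baryCoord s v y) + baryCoord s v z := by
      rw [AffineMap.map_vadd, map_smul, AffineMap.linearMap_vsub]; rfl
    constructor
    · simp only [hcoord, Finset.sum_add_distrib, ← Finset.mul_sum, Finset.sum_sub_distrib, hx.1,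
        hy.1, hz.1, sub_self, mul_zero, zero_add]
    · simp only [hcoord, add_smul, mul_smul, sub_smul, Finset.sum_add_distrib, ← Finset.smul_sum,
        Finset.sum_sub_distrib, hx.2, hy.2, hz.2]; rfl

lemma sum_baryCoord (hs : IsSimplex s) (hx : x ∈ affineSpan ℝ (s : Set E)) :
    ∑ v ∈ s, baryCoord s v x = 1 :=
  (hs.sum_baryCoord_and_sum_smul hx).1

lemma sum_baryCoord_smul (hs : IsSimplex s) (hx : x ∈ affineSpan ℝ (s : Set E)) :
    ∑ v ∈ s, baryCoord s v x • v = x :=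
  (hs.sum_baryCoord_and_sum_smul hx).2

lemma baryCoord_of_mem_affineSpan_face (hs : IsSimplex s) (ht : IsSimplex t) (hts : t ⊆ s)
    (hx : x ∈ affineSpan ℝ (t : Set E)) (hv : v ∈ s) :
    baryCoord s v x = if v ∈ t then baryCoord t v x else 0 := by
  have heq : Set.EqOn (baryCoord s v) (if v ∈ t then baryCoord t v else 0 : E →ᵃ[ℝ] ℝ) t := by
    intro u hu
    split_ifs with hvt
    · rw [hs.baryCoord_vertex hv (hts hu), ht.baryCoord_vertex hvt hu]
    · rw [hs.baryCoord_vertex hv (hts hu), if_neg (by rintro rfl; exact hvt hu)]; rfl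
  rw [AffineMap.eqOn_affineSpan heq hx]
  split_ifs <;> rfl

lemma mem_convexHull_iff (hs : IsSimplex s) :
    x ∈ convexHull ℝ (s : Set E) ↔
      x ∈ affineSpan ℝ (s : Set E) ∧ ∀ v ∈ s, 0 ≤ baryCoord s v x := by
  refine ⟨fun hx ↦ ⟨convexHull_subset_affineSpan _ hx, fun v hv ↦ ?_⟩, fun ⟨hx, hpos⟩ ↦ ?_⟩
  · refine convexHull_min (fun u hu ↦ ?_) ((convex_Ici 0).affine_preimage (baryCoord s v)) hx
    rw [Set.mem_preimage, Set.mem_Ici, hs.baryCoord_vertex hv hu]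
    split_ifs <;> simp
  · rw [← hs.sum_baryCoord_smul hx]
    exact (convex_convexHull ℝ _).sum_mem hpos (hs.sum_baryCoord hx)
      fun v hv ↦ subset_convexHull ℝ _ hv

/-- The orthogonal projection onto the affine span of a simplex. -/
def orthProj (hs : IsSimplex s) : E →ᵃ[ℝ] E :=
  haveI := hs.nonempty_affineSpan
  (affineSpan ℝ (s : Set E)).subtype.comp
    (EuclideanGeometry.orthogonalProjection (affineSpan ℝ (s : Set E))).toAffineMap

lemma continuous_orthProj (hs : IsSimplex s) : Continuous hs.orthProj :=
  hs.orthProj.continuous_of_finiteDimensional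

lemma orthProj_mem (hs : IsSimplex s) (y : E) : hs.orthProj y ∈ affineSpan ℝ (s : Set E) :=
  Subtype.coe_prop _

lemma orthProj_eq_self (hs : IsSimplex s) (hy : y ∈ affineSpan ℝ (s : Set E)) :
    hs.orthProj y = y :=
  haveI := hs.nonempty_affineSpan
  EuclideanGeometry.orthogonalProjection_eq_self_iff.2 hy

lemma sub_orthProj_mem_orthogonal (hs : IsSimplex s) (y : E) :
    y - hs.orthProj y ∈ (vectorSpan ℝ (s : Set E))ᗮ := by
  have := hs.nonempty_affineSpan
  rw [← direction_affineSpan]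
  exact EuclideanGeometry.vsub_orthogonalProjection_mem_direction_orthogonal _ y

lemma convexHull_add_orthogonal_eq (hs : IsSimplex s) :
    {y | ∃ c ∈ convexHull ℝ (s : Set E), ∃ w ∈ (vectorSpan ℝ (s : Set E))ᗮ, y = c + w} =
      {y | ∀ v ∈ s, 0 ≤ baryCoord s v y} := by
  ext y
  constructor
  · rintro ⟨c, hc, w, hw, rfl⟩ v hv
    rw [hs.baryCoord_add_orthogonal hv hw]
    exact (hs.mem_convexHull_iff.1 hc).2 v hv
  · intro hy
    refine ⟨hs.orthProj y, hs.mem_convexHull_iff.2 ⟨hs.orthProj_mem y, fun v hv ↦ ?_⟩,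
      y - hs.orthProj y, hs.sub_orthProj_mem_orthogonal y, (add_sub_cancel _ _).symm⟩
    rw [← hs.baryCoord_add_orthogonal hv (hs.sub_orthProj_mem_orthogonal y), add_sub_cancel]
    exact hy v hv

end IsSimplex

end BarycentricCoordinates

section OpenSimplex

namespace IsSimplex

variable {s t : Finset (Euc N)} {v x z : Euc N}

lemma baryCoord_pos_of_mem_openSimplex (hs : IsSimplex s) (hx : x ∈ openSimplex s) (hv : v ∈ s) :
    0 < baryCoord s v x := by
  let A := affineSpan ℝ (convexHull ℝ (s : Set (Euc N)))
  obtain ⟨⟨y, hyA⟩, hy, rfl⟩ := mem_intrinsicInterior.1 hx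
  have hyc : y ∈ convexHull ℝ (s : Set (Euc N)) :=
    interior_subset (s := ((↑) : A → Euc N) ⁻¹' convexHull ℝ (s : Set (Euc N))) hy
  refine ((hs.mem_convexHull_iff.1 hyc).2 v hv).lt_of_ne' fun hzero ↦ ?_
  have hvA : v ∈ A := subset_affineSpan ℝ _ (subset_convexHull ℝ _ hv)
  let g (t : ℝ) : A := ⟨AffineMap.lineMap v y t, AffineMap.lineMap_mem t hvA hyA⟩
  have hg : Tendsto g (nhds 1) (nhds ⟨y, hyA⟩) := by
    have hcont : Continuous g := AffineMap.lineMap_continuous.subtype_mk _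
    simpa [g] using hcont.tendsto 1
  have hmem : ∀ᶠ t in nhdsWithin (1 : ℝ) (Set.Ioi 1), (g t : Euc N) ∈ convexHull ℝ (s : Set _) :=
    (hg.eventually (mem_interior_iff_mem_nhds.1 hy)).filter_mono nhdsWithin_le_nhds
  obtain ⟨t, ht, ht1 : 1 < t⟩ := (hmem.and self_mem_nhdsWithin).exists
  have hcoord := (hs.mem_convexHull_iff.1 ht).2 v hv
  rw [AffineMap.apply_lineMap, hs.baryCoord_vertex hv hv, hzero, AffineMap.lineMap_apply] at hcoord
  simp only [↓reduceIte, vsub_eq_sub, zero_sub, smul_eq_mul, mul_neg, mul_one, vadd_eq_add,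
    le_neg_add_iff_add_le, add_zero] at hcoord
  linarith

lemma mem_openSimplex_iff (hs : IsSimplex s) :
    x ∈ openSimplex s ↔
      x ∈ affineSpan ℝ (s : Set (Euc N)) ∧ ∀ v ∈ s, 0 < baryCoord s v x := by
  refine ⟨fun hx ↦ ⟨convexHull_subset_affineSpan _ (intrinsicInterior_subset hx),
    fun v hv ↦ hs.baryCoord_pos_of_mem_openSimplex hx hv⟩, fun ⟨hx, hpos⟩ ↦ ?_⟩
  have hxc := hs.mem_convexHull_iff.2 ⟨hx, fun v hv ↦ (hpos v hv).le⟩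
  refine mem_intrinsicInterior.2 ⟨⟨x, subset_affineSpan ℝ _ hxc⟩, ?_, rfl⟩
  have hev : ∀ᶠ y : affineSpan ℝ (convexHull ℝ (s : Set (Euc N))) in
      nhds ⟨x, subset_affineSpan ℝ _ hxc⟩, ∀ v ∈ s, 0 < baryCoord s v y :=
    (Filter.eventually_all_finset _).2 fun v hv ↦
      ((continuous_baryCoord s v).comp continuous_subtype_val).continuousAt.eventually
        (lt_mem_nhds (hpos v hv))
  rw [mem_interior_iff_mem_nhds]
  filter_upwards [hev] with y hy
  exact hs.mem_convexHull_iff.2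
    ⟨(affineSpan_convexHull (𝕜 := ℝ) (s : Set (Euc N))).le y.2, fun v hv ↦ (hy v hv).le⟩

lemma centroid_mem_openSimplex (hs : IsSimplex s) : s.centroid ℝ id ∈ openSimplex s := by
  refine hs.mem_openSimplex_iff.2 ⟨convexHull_subset_affineSpan _
    (s.centroid_mem_convexHull hs.nonempty), fun v hv ↦ ?_⟩
  have hw := Finset.sum_centroidWeights_eq_one_of_nonempty ℝ s hs.nonempty
  have hterm : ∀ u ∈ s, s.centroidWeights ℝ u • (baryCoord s v ∘ id) u =
      (s.card : ℝ)⁻¹ * if u = v then 1 else 0 := fun u hu ↦ by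
    simp [hs.baryCoord_vertex hv hu]
  rw [Finset.centroid, Finset.map_affineCombination _ _ _ hw,
    Finset.affineCombination_eq_linear_combination _ _ _ hw, Finset.sum_congr rfl hterm]
  simp [hv, hs.nonempty.card_pos]

lemma lineMap_mem_openSimplex (hs : IsSimplex s) (hx : x ∈ convexHull ℝ (s : Set (Euc N)))
    (hz : z ∈ openSimplex s) {c : ℝ} (hc₀ : 0 < c) (hc₁ : c ≤ 1) :
    AffineMap.lineMap x z c ∈ openSimplex s := by
  rw [hs.mem_convexHull_iff] at hx
  rw [hs.mem_openSimplex_iff] at hz ⊢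
  refine ⟨AffineMap.lineMap_mem c hx.1 hz.1, fun v hv ↦ ?_⟩
  rw [AffineMap.apply_lineMap, AffineMap.lineMap_apply_module]
  have hx_nonneg := hx.2 v hv
  have hz_pos := hz.2 v hv
  simp only [smul_eq_mul]
  nlinarith [mul_pos hc₀ hz_pos]

lemma convexHull_subset_of_openSimplex_subset (hs : IsSimplex s) {C : Set (Euc N)}
    (hC : IsClosed C) (h : openSimplex s ⊆ C) : convexHull ℝ (s : Set (Euc N)) ⊆ C := by
  intro x hx
  let γ : ℝ → Euc N := AffineMap.lineMap x (s.centroid ℝ id)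
  have hγ : Tendsto γ (nhdsWithin 0 (Set.Ioi 0)) (nhds x) := by
    have hcont : Continuous γ := AffineMap.lineMap_continuous
    simpa [γ] using (hcont.tendsto 0).mono_left nhdsWithin_le_nhds
  refine hC.mem_of_tendsto hγ ?_
  filter_upwards [Ioc_mem_nhdsGT one_pos] with c hc
  exact h (hs.lineMap_mem_openSimplex hx hs.centroid_mem_openSimplex hc.1 hc.2)

lemma baryCoord_of_mem_openSimplex_face (hs : IsSimplex s) (ht : IsSimplex t)
    (hts : t ⊆ s) (hx : x ∈ openSimplex t) :
    (∀ v ∈ t, 0 < baryCoord s v x) ∧ ∀ v ∈ s \ t, baryCoord s v x = 0 := by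
  obtain ⟨hx_span, hpos⟩ := ht.mem_openSimplex_iff.1 hx
  refine ⟨fun v hv ↦ ?_, fun v hv ↦ ?_⟩
  · rw [hs.baryCoord_of_mem_affineSpan_face ht hts hx_span (hts hv), if_pos hv]
    exact hpos v hv
  · obtain ⟨hvs, hvt⟩ := Finset.mem_sdiff.1 hv
    rw [hs.baryCoord_of_mem_affineSpan_face ht hts hx_span hvs, if_neg hvt]

end IsSimplex

end OpenSimplex

section PolyhedralCone

open scoped Pointwise

/-- The polyhedral cone on which all the linear functionals `f i`, `i ∈ S`, are nonnegative. -/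
def polyCone {ι E : Type*} [AddCommGroup E] [Module ℝ E] (f : ι → E →ₗ[ℝ] ℝ) (S : Finset ι) :
    Set E :=
  {y | ∀ i ∈ S, 0 ≤ f i y}

lemma smul_polyCone {ι E : Type*} [AddCommGroup E] [Module ℝ E] (f : ι → E →ₗ[ℝ] ℝ)
    (S : Finset ι) {ε : ℝ} (hε : 0 < ε) : ε • polyCone f S = polyCone f S := by
  ext y
  rw [Set.mem_smul_set_iff_inv_smul_mem₀ hε.ne']
  refine forall₂_congr fun i _ ↦ ?_
  rw [map_smul, smul_eq_mul, mul_nonneg_iff_of_pos_left (inv_pos.2 hε)]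

lemma measureReal_biInter_compl_eq_sum_powerset {α ι : Type*} [MeasurableSpace α] (μ : Measure α)
    [IsFiniteMeasure μ] {H : ι → Set α} {S : Finset ι} (hH : ∀ i ∈ S, MeasurableSet (H i)) :
    μ.real (⋂ i ∈ S, (H i)ᶜ) =
      ∑ T ∈ S.powerset, (-1 : ℝ) ^ T.card * μ.real (⋂ i ∈ T, H i) := by
  have hempty : S.powerset.filter (¬ ·.Nonempty) = {∅} := by
    ext T
    simp only [Finset.mem_filter, Finset.mem_powerset, Finset.not_nonempty_iff_eq_empty,
      Finset.mem_singleton, and_iff_right_iff_imp]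
    rintro rfl
    exact Finset.empty_subset S
  rw [← Finset.sum_filter_add_sum_filter_not _ (·.Nonempty), hempty, ← Set.compl_iUnion₂,
    measureReal_compl (Finset.measurableSet_biUnion _ hH),
    measureReal_biUnion_eq_sum_powerset hH]
  simp [pow_succ, sub_eq_neg_add]

variable {ι E : Type*} [NormedAddCommGroup E] [NormedSpace ℝ E] [FiniteDimensional ℝ E]
  [MeasurableSpace E] [BorelSpace E] (μ : Measure E) [μ.IsAddHaarMeasure]

/-- The fraction of the unit ball occupied by the polyhedral cone of the functionals `f i`,
`i ∈ S`. -/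
def coneFraction (f : ι → E →ₗ[ℝ] ℝ) (S : Finset ι) : ℝ :=
  μ.real (Metric.ball 0 1 ∩ polyCone f S) / μ.real (Metric.ball 0 1)

lemma measureReal_ball_inter_vadd_cone_div (x : E) {C : Set E} {ε : ℝ} (hε : 0 < ε)
    (hC : ε • C = C) :
    μ.real (Metric.ball x ε ∩ (x +ᵥ C)) / μ.real (Metric.ball x ε) =
      μ.real (Metric.ball 0 1 ∩ C) / μ.real (Metric.ball 0 1) := by
  have hscale (A : Set E) :
      μ.real (x +ᵥ ε • A) = ε ^ Module.finrank ℝ E * μ.real A := by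
    simp [measureReal_def, measure_vadd, Measure.addHaar_smul, abs_of_pos hε, hε.le]
  have hinter : Metric.ball x ε ∩ (x +ᵥ C) = x +ᵥ ε • (Metric.ball 0 1 ∩ C) := by
    rw [← affinity_unitBall hε, Set.smul_set_inter₀ hε.ne', hC, Set.vadd_set_inter]
  rw [hinter, ← affinity_unitBall hε, hscale, hscale, mul_div_mul_left _ _ (by positivity)]

lemma ae_linearMap_ne_zero {f : E →ₗ[ℝ] ℝ} (hf : f ≠ 0) : ∀ᵐ y ∂μ, f y ≠ 0 :=
  measure_eq_zero_iff_ae_notMem.1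
    (Measure.addHaar_submodule μ f.ker fun h ↦ hf (LinearMap.ker_eq_top.1 h))

-- Up to null sets, the complements of the half-spaces `0 ≤ f i` are their images under negation.
lemma sum_powerset_neg_one_pow_mul_coneFraction {f : ι → E →ₗ[ℝ] ℝ} {S : Finset ι}
    (hf : ∀ i ∈ S, f i ≠ 0) :
    ∑ T ∈ S.powerset, (-1 : ℝ) ^ T.card * coneFraction μ f T = coneFraction μ f S := by
  let B : Set E := Metric.ball 0 1
  let H (i : ι) : Set E := {y | 0 ≤ f i y}
  have hH (i) : MeasurableSet (H i) :=
    (isClosed_le continuous_const (f i).continuous_of_finiteDimensional).measurableSet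
  have hcone (T : Finset ι) : polyCone f T = ⋂ i ∈ T, H i := by ext; simp [polyCone, H]
  have : IsFiniteMeasure (μ.restrict B) := ⟨by simpa using measure_ball_lt_top⟩
  have hrestrict (A : Set E) : (μ.restrict B).real A = μ.real (B ∩ A) := by
    rw [measureReal_restrict_apply' measurableSet_ball, Set.inter_comm]
  have hneg : B ∩ ⋂ i ∈ S, (H i)ᶜ = -(B ∩ {y | ∀ i ∈ S, 0 < f i y}) := by
    ext y; simp [B, H]
  have hnull : (B ∩ {y | ∀ i ∈ S, 0 < f i y} : Set E) =ᵐ[μ] (B ∩ polyCone f S : Set E) := by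
    filter_upwards [(Filter.eventually_all_finset S).2 fun i hi ↦ ae_linearMap_ne_zero μ (hf i hi)]
      with y hy
    exact propext <| and_congr_right fun _ ↦ forall₂_congr fun i hi ↦
      (lt_iff_le_and_ne.trans (and_iff_left (hy i hi).symm))
  have hmeasure : μ.real (B ∩ ⋂ i ∈ S, (H i)ᶜ) = μ.real (B ∩ polyCone f S) := by
    rw [hneg, measureReal_def, Measure.measure_neg, measure_congr hnull, measureReal_def]
  simp only [coneFraction, ← mul_div_assoc, ← Finset.sum_div]
  rw [← hmeasure, ← hrestrict,
    measureReal_biInter_compl_eq_sum_powerset (μ.restrict B) fun i _ ↦ hH i]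
  simp only [hrestrict, hcone, B]

end PolyhedralCone

section SolidAngle

open scoped Pointwise

namespace IsSimplex

variable {σ η τ : Finset (Euc N)} {x : Euc N}

lemma baryCoord_linear_ne_zero (hσ : IsSimplex σ) (hτ : τ.Nonempty) (hτσ : τ ⊆ σ) {v : Euc N}
    (hv : v ∈ σ \ τ) : (baryCoord σ v).linear ≠ 0 := by
  obtain ⟨u, hu⟩ := hτ
  obtain ⟨hvσ, hvτ⟩ := Finset.mem_sdiff.1 hv
  intro hzero
  have := baryCoord_eq_linear_sub_add σ v u v
  rw [hσ.baryCoord_vertex hvσ hvσ, hσ.baryCoord_vertex hvσ (hτσ hu),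
    if_neg (ne_of_mem_of_not_mem hu hvτ), hzero] at this
  simp at this

lemma eventually_ball_inter_eq_vadd_polyCone (hσ : IsSimplex σ) (hη : IsSimplex η) (hησ : η ⊆ σ)
    (hx : x ∈ openSimplex η) :
    ∀ᶠ ε in nhdsWithin (0 : ℝ) (Set.Ioi 0),
      Metric.ball x ε ∩ {y | ∀ v ∈ σ, 0 ≤ baryCoord σ v y} =
        Metric.ball x ε ∩ (x +ᵥ polyCone (fun v ↦ (baryCoord σ v).linear) (σ \ η)) := by
  obtain ⟨hpos, hzero⟩ := hσ.baryCoord_of_mem_openSimplex_face hη hησ hx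
  have hev : ∀ᶠ y in nhds x, ∀ v ∈ η, 0 < baryCoord σ v y :=
    (Filter.eventually_all_finset _).2 fun v hv ↦
      (continuous_baryCoord σ v).continuousAt.eventually (lt_mem_nhds (hpos v hv))
  obtain ⟨δ, hδ, hball⟩ := Metric.eventually_nhds_iff_ball.1 hev
  filter_upwards [Ioo_mem_nhdsGT hδ] with ε hε
  ext y
  simp only [Set.mem_inter_iff, and_congr_right_iff, Set.mem_vadd_set_iff_neg_vadd_mem]
  intro hy
  have hlinear (v) (hv : v ∈ σ \ η) :
      baryCoord σ v y = (baryCoord σ v).linear (-x +ᵥ y) := by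
    rw [baryCoord_eq_linear_sub_add σ v x y, hzero v hv, add_zero, vadd_eq_add, neg_add_eq_sub]
  constructor
  · intro h v hv
    exact (hlinear v hv).symm ▸ h v (Finset.mem_sdiff.1 hv).1
  · intro h v hv
    by_cases hvη : v ∈ η
    · exact (hball y (Metric.ball_subset_ball hε.2.le hy) v hvη).le
    · have hv' := Finset.mem_sdiff.2 ⟨hv, hvη⟩
      exact hlinear v hv' ▸ h v hv'

lemma eventually_ballFraction_eq_coneFraction (hσ : IsSimplex σ) (hη : IsSimplex η)
    (hησ : η ⊆ σ) (hx : x ∈ openSimplex η) :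
    ∀ᶠ ε in nhdsWithin (0 : ℝ) (Set.Ioi 0),
      volume.real (Metric.ball x ε ∩ {y | ∀ v ∈ σ, 0 ≤ baryCoord σ v y}) /
        volume.real (Metric.ball x ε) =
          coneFraction volume (fun v ↦ (baryCoord σ v).linear) (σ \ η) := by
  filter_upwards [hσ.eventually_ball_inter_eq_vadd_polyCone hη hησ hx, self_mem_nhdsWithin]
    with ε hset hε
  rw [hset, measureReal_ball_inter_vadd_cone_div volume x hε (smul_polyCone _ _ hε), coneFraction]

lemma solidAngle_eq_coneFraction (hσ : IsSimplex σ) (hη : IsSimplex η) (hησ : η ⊆ σ) :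
    solidAngle η σ = coneFraction volume (fun v ↦ (baryCoord σ v).linear) (σ \ η) := by
  refine Tendsto.limUnder_eq (Tendsto.congr' ?_ tendsto_const_nhds)
  filter_upwards [hσ.eventually_ballFraction_eq_coneFraction hη hησ hη.centroid_mem_openSimplex]
    with ε hε
  rw [hσ.convexHull_add_orthogonal_eq]
  exact hε.symm

lemma eventually_ballFraction_eq_solidAngle (hσ : IsSimplex σ) (hη : IsSimplex η)
    (hησ : η ⊆ σ) (hx : x ∈ openSimplex η) :
    ∀ᶠ ε in nhdsWithin (0 : ℝ) (Set.Ioi 0),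
      volume.real (Metric.ball x ε ∩ {y | ∀ v ∈ σ, 0 ≤ baryCoord σ v y}) /
        volume.real (Metric.ball x ε) = solidAngle η σ := by
  rw [hσ.solidAngle_eq_coneFraction hη hησ]
  exact hσ.eventually_ballFraction_eq_coneFraction hη hησ hx

lemma sum_neg_one_pow_mul_solidAngle (hσ : IsSimplex σ) (hτ : τ.Nonempty) (hτσ : τ ⊆ σ) :
    ∑ η ∈ σ.powerset with τ ⊆ η, (-1 : ℝ) ^ (η.card + τ.card) * solidAngle η σ =
      (-1 : ℝ) ^ (σ.card + τ.card) * solidAngle τ σ := by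
  have hface {η : Finset (Euc N)} (hησ : η ⊆ σ) (hτη : τ ⊆ η) : IsSimplex η :=
    hσ.mono (hτ.mono hτη) hησ
  rw [hσ.solidAngle_eq_coneFraction (hface hτσ subset_rfl) hτσ,
    ← sum_powerset_neg_one_pow_mul_coneFraction volume
      fun v hv ↦ hσ.baryCoord_linear_ne_zero hτ hτσ hv, Finset.mul_sum]
  refine Finset.sum_bij' (fun η _ ↦ σ \ η) (fun S _ ↦ σ \ S) ?_ ?_ ?_ ?_ ?_
  · simp only [Finset.mem_filter, Finset.mem_powerset, and_imp]
    exact fun η _ hτη ↦ Finset.sdiff_subset_sdiff subset_rfl hτη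
  · intro S hS
    rw [Finset.mem_powerset, Finset.subset_sdiff] at hS
    rw [Finset.mem_filter, Finset.mem_powerset, Finset.subset_sdiff]
    exact ⟨Finset.sdiff_subset, hτσ, hS.2.symm⟩
  · simp +contextual
  · intro S hS
    exact Finset.sdiff_sdiff_eq_self ((Finset.mem_powerset.1 hS).trans Finset.sdiff_subset)
  · intro η hη
    rw [Finset.mem_filter, Finset.mem_powerset] at hη
    have hcard : (σ \ η).card + η.card = σ.card := Finset.card_sdiff_add_card_eq_card hη.1
    rw [hσ.solidAngle_eq_coneFraction (hface hη.1 hη.2) hη.1, ← mul_assoc, ← pow_add, ← hcard,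
      show (σ \ η).card + η.card + τ.card + (σ \ η).card =
        2 * (σ \ η).card + (η.card + τ.card) by ring, pow_add _ (2 * _), pow_mul, neg_one_sq,
      one_pow, one_mul]

end IsSimplex

end SolidAngle

section EulerCharacteristic

variable {E : Type*} [AddCommGroup E] [Module ℝ E]

/-- A relatively open convex set, in the topology-free form that every segment of `C` can be
prolonged inside `C` beyond its end points. -/
structure IsRelOpenConvex (C : Set E) : Prop where
  convex : Convex ℝ C
  exists_prolongation : ∀ x ∈ C, ∀ y ∈ C, ∃ ε : ℝ, 0 < ε ∧ x + ε • (x - y) ∈ C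

/-- The Euler characteristic with compact supports of a relatively open convex set `C`, which is
an open cell of dimension `dim (vectorSpan C)` when it is nonempty. -/
def convexEulerChar (C : Set E) : ℝ :=
  if C.Nonempty then (-1) ^ Module.finrank ℝ (vectorSpan ℝ C) else 0

lemma convexEulerChar_empty : convexEulerChar (∅ : Set E) = 0 := by
  simp [convexEulerChar]

namespace IsRelOpenConvex

variable {C D : Set E}

lemma exists_forall_abs_le_add_smul_sub_mem (hC : IsRelOpenConvex C) {x y : E} (hx : x ∈ C)
    (hy : y ∈ C) : ∃ ε : ℝ, 0 < ε ∧ ∀ t, |t| ≤ ε → x + t • (y - x) ∈ C := by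
  obtain ⟨ε, hε, hmem⟩ := hC.exists_prolongation x hx y hy
  refine ⟨min ε 1, lt_min hε one_pos, fun t ht ↦ ?_⟩
  obtain ⟨hlo, hhi⟩ := abs_le.1 ht
  have hlo' : -ε ≤ t := by linarith [min_le_left ε 1]
  have hhi' : t ≤ 1 := hhi.trans (min_le_right ε 1)
  have hpos : 0 < 1 + ε := by linarith
  have hconvex : x + t • (y - x) =
      ((1 - t) / (1 + ε)) • (x + ε • (x - y)) + ((t + ε) / (1 + ε)) • y := by
    match_scalars <;> field_simp <;> ring
  rw [hconvex]
  exact hC.convex hmem hy (div_nonneg (by linarith) hpos.le) (div_nonneg (by linarith) hpos.le)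
    (by field_simp; ring)

lemma inter (hC : IsRelOpenConvex C) (hD : IsRelOpenConvex D) : IsRelOpenConvex (C ∩ D) := by
  refine ⟨hC.convex.inter hD.convex, fun x hx y hy ↦ ?_⟩
  obtain ⟨ε, hε, hmemC⟩ := hC.exists_forall_abs_le_add_smul_sub_mem hx.1 hy.1
  obtain ⟨δ, hδ, hmemD⟩ := hD.exists_forall_abs_le_add_smul_sub_mem hx.2 hy.2
  have hpos : 0 < min ε δ := lt_min hε hδ
  have habs : |-(min ε δ)| = min ε δ := by rw [abs_neg, abs_of_pos hpos]
  refine ⟨min ε δ, hpos, ?_⟩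
  rw [show x + min ε δ • (x - y) = x + (-min ε δ) • (y - x) by module]
  exact ⟨hmemC _ (habs.trans_le (min_le_left ε δ)), hmemD _ (habs.trans_le (min_le_right ε δ))⟩

lemma inter_preimage_singleton (hC : IsRelOpenConvex C) (ℓ : E →ₗ[ℝ] ℝ) (t : ℝ) :
    IsRelOpenConvex (C ∩ ℓ ⁻¹' {t}) := by
  refine hC.inter ⟨(convex_singleton t).linear_preimage ℓ, fun x hx y hy ↦ ⟨1, one_pos, ?_⟩⟩
  rw [Set.mem_preimage, Set.mem_singleton_iff] at *
  simp [hx, hy]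

lemma exists_forall_abs_le_add_smul_mem (hC : IsRelOpenConvex C) {x v : E} (hx : x ∈ C)
    (hv : v ∈ vectorSpan ℝ C) : ∃ ε : ℝ, 0 < ε ∧ ∀ t, |t| ≤ ε → x + t • v ∈ C := by
  rw [vectorSpan_eq_span_vsub_set_right ℝ hx] at hv
  induction hv using Submodule.span_induction with
  | mem v hv =>
    obtain ⟨y, hy, rfl⟩ := hv
    exact hC.exists_forall_abs_le_add_smul_sub_mem hx hy
  | zero => exact ⟨1, one_pos, fun t _ ↦ by simpa using hx⟩
  | add u w _ _ hu hw =>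
    obtain ⟨ε, hε, hmemu⟩ := hu
    obtain ⟨δ, hδ, hmemw⟩ := hw
    refine ⟨min ε δ / 2, by positivity, fun t ht ↦ ?_⟩
    have habs : |2 * t| ≤ min ε δ := by rw [abs_mul, abs_two]; linarith
    rw [show x + t • (u + w) = (1 / 2 : ℝ) • (x + (2 * t) • u) + (1 / 2 : ℝ) • (x + (2 * t) • w) by
      module]
    exact hC.convex (hmemu _ (habs.trans (min_le_left _ _)))
      (hmemw _ (habs.trans (min_le_right _ _))) (by norm_num) (by norm_num) (by norm_num)
  | smul c u _ hu =>
    obtain ⟨ε, hε, hmem⟩ := hu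
    refine ⟨ε / (|c| + 1), by positivity, fun t ht ↦ ?_⟩
    rw [smul_smul]
    refine hmem _ ?_
    rw [le_div_iff₀ (by positivity)] at ht
    rw [abs_mul]
    nlinarith [abs_nonneg t]

lemma mem_vectorSpan_inter (hC : IsRelOpenConvex C) {x v : E} (hx : x ∈ C ∩ D)
    (hv : v ∈ vectorSpan ℝ C) (hD : ∀ᶠ t in nhdsWithin (0 : ℝ) (Set.Ioi 0), x + t • v ∈ D) :
    v ∈ vectorSpan ℝ (C ∩ D) := by
  obtain ⟨ε, hε, hmem⟩ := hC.exists_forall_abs_le_add_smul_mem hx.1 hv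
  obtain ⟨t, htD, ht₀, htε⟩ := (hD.and (Ioc_mem_nhdsGT hε)).exists
  have htC : x + t • v ∈ C := hmem t ((abs_of_pos ht₀).trans_le htε)
  have hmem' : x + t • v ∈ C ∩ D := ⟨htC, htD⟩
  have hsub := vsub_mem_vectorSpan ℝ hmem' hx
  rw [vsub_eq_sub, add_sub_cancel_left] at hsub
  simpa [smul_smul, ht₀.ne'] using Submodule.smul_mem _ t⁻¹ hsub

lemma vectorSpan_inter_preimage_singleton (hC : IsRelOpenConvex C) (ℓ : E →ₗ[ℝ] ℝ) {t : ℝ}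
    (ht : (C ∩ ℓ ⁻¹' {t}).Nonempty) :
    vectorSpan ℝ (C ∩ ℓ ⁻¹' {t}) =
      (LinearMap.ker (ℓ ∘ₗ (vectorSpan ℝ C).subtype)).map (vectorSpan ℝ C).subtype := by
  obtain ⟨x, hx⟩ := ht
  refine le_antisymm ?_ ?_
  · rw [vectorSpan_def, Submodule.span_le]
    rintro _ ⟨a, ⟨haC, rfl⟩, b, ⟨hbC, hab⟩, rfl⟩
    have hker : ℓ (a - b) = 0 := by rw [map_sub, sub_eq_zero]; exact hab.symm
    exact ⟨⟨a -ᵥ b, vsub_mem_vectorSpan ℝ haC hbC⟩, hker, rfl⟩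
  · rintro _ ⟨⟨v, hv⟩, hker, rfl⟩
    have hℓv : ℓ v = 0 := hker
    refine hC.mem_vectorSpan_inter hx hv (Eventually.of_forall fun δ ↦ ?_)
    have hℓx : ℓ x = t := hx.2
    simp [hℓv, hℓx]

lemma convexEulerChar_inter_preimage_singleton [FiniteDimensional ℝ E] (hC : IsRelOpenConvex C)
    (ℓ : E →ₗ[ℝ] ℝ) {x y : E} (hx : x ∈ C) (hy : y ∈ C) (hxy : ℓ x ≠ ℓ y) {t : ℝ}
    (ht : (C ∩ ℓ ⁻¹' {t}).Nonempty) :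
    convexEulerChar (C ∩ ℓ ⁻¹' {t}) = -convexEulerChar C := by
  have hrank := (ℓ ∘ₗ (vectorSpan ℝ C).subtype).finrank_range_add_finrank_ker
  have hne : ℓ ∘ₗ (vectorSpan ℝ C).subtype ≠ 0 := fun h ↦ hxy <| by
    have hzero := LinearMap.congr_fun h ⟨x -ᵥ y, vsub_mem_vectorSpan ℝ hx hy⟩
    rw [← sub_eq_zero, ← map_sub]
    exact hzero
  rw [LinearMap.range_eq_top.2 (LinearMap.surjective hne), finrank_top,
    Module.finrank_self] at hrank
  rw [convexEulerChar, convexEulerChar, if_pos ht, if_pos ⟨x, hx⟩,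
    hC.vectorSpan_inter_preimage_singleton ℓ ht, Submodule.finrank_map_subtype_eq, ← hrank, pow_add]
  ring

end IsRelOpenConvex

end EulerCharacteristic

section EulerCharacteristicAdditivity

lemma eventually_add_ne (t a : ℝ) : ∀ᶠ δ in nhdsWithin (0 : ℝ) (Set.Ioi 0), t + δ ≠ a := by
  have hne : ∀ᶠ δ in nhdsWithin (0 : ℝ) (Set.Ioi 0), δ ≠ a - t := by
    rcases eq_or_ne (a - t) 0 with h | h
    · rw [h]
      exact eventually_mem_nhdsWithin.mono fun δ hδ ↦ ne_of_gt hδ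
    · exact nhdsWithin_le_nhds (eventually_ne_nhds h.symm)
  exact hne.mono fun δ hδ h ↦ hδ (by linarith)

lemma eventually_add_mem_Ioo_iff (t a b : ℝ) :
    ∀ᶠ δ in nhdsWithin (0 : ℝ) (Set.Ioi 0), (t + δ ∈ Set.Ioo a b ↔ t ∈ Set.Ico a b) := by
  have hsmall : ∀ c, t < c → ∀ᶠ δ in nhdsWithin (0 : ℝ) (Set.Ioi 0), t + δ < c := fun c hc ↦ by
    filter_upwards [Ioo_mem_nhdsGT (sub_pos.2 hc)] with δ hδ
    linarith [hδ.2]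
  have hlower : ∀ᶠ δ in nhdsWithin (0 : ℝ) (Set.Ioi 0), (a < t + δ ↔ a ≤ t) := by
    rcases le_or_gt a t with h | h
    · exact eventually_mem_nhdsWithin.mono fun δ hδ ↦
        ⟨fun _ ↦ h, fun _ ↦ by linarith [Set.mem_Ioi.1 hδ]⟩
    · exact (hsmall a h).mono fun δ hδ ↦ ⟨fun h' ↦ by linarith, fun h' ↦ by linarith⟩
  have hupper : ∀ᶠ δ in nhdsWithin (0 : ℝ) (Set.Ioi 0), (t + δ < b ↔ t < b) := by
    rcases lt_or_ge t b with h | h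
    · exact (hsmall b h).mono fun δ hδ ↦ ⟨fun _ ↦ h, fun _ ↦ hδ⟩
    · exact eventually_mem_nhdsWithin.mono fun δ hδ ↦
        ⟨fun _ ↦ by linarith [Set.mem_Ioi.1 hδ], fun h' ↦ by linarith⟩
  filter_upwards [hlower, hupper] with δ hl hu
  rw [Set.mem_Ioo, Set.mem_Ico, hl, hu]

variable {E : Type*} [NormedAddCommGroup E] [NormedSpace ℝ E] {D : Set E}

lemma tendsto_add_smul_nhdsGT_zero (x v : E) :
    Tendsto (fun t : ℝ ↦ x + t • v) (nhdsWithin 0 (Set.Ioi 0)) (nhds x) := by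
  have hcont : Continuous fun t : ℝ ↦ x + t • v := by fun_prop
  simpa using (hcont.tendsto 0).mono_left nhdsWithin_le_nhds

lemma isRelOpenConvex_of_isOpen {C : Set E} (hC : Convex ℝ C) (hopen : IsOpen C) :
    IsRelOpenConvex C :=
  ⟨hC, fun x hx y _ ↦ (eventually_mem_nhdsWithin.and
    ((tendsto_add_smul_nhdsGT_zero x (x - y)).eventually (hopen.mem_nhds hx))).exists⟩

namespace IsRelOpenConvex

variable {C : Set E}

lemma convexEulerChar_inter_isOpen (hC : IsRelOpenConvex C) (hD : IsOpen D)
    (hne : (C ∩ D).Nonempty) : convexEulerChar (C ∩ D) = convexEulerChar C := by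
  obtain ⟨x, hx⟩ := hne
  have hspan : vectorSpan ℝ (C ∩ D) = vectorSpan ℝ C :=
    (vectorSpan_mono ℝ Set.inter_subset_left).antisymm fun v hv ↦ hC.mem_vectorSpan_inter hx hv <|
      (tendsto_add_smul_nhdsGT_zero x v).eventually (hD.mem_nhds hx.2)
  rw [convexEulerChar, convexEulerChar, if_pos ⟨x, hx⟩, if_pos ⟨x, hx.1⟩, hspan]

lemma image_eq_Ioo (hC : IsRelOpenConvex C) (hbdd : Bornology.IsBounded C) (ℓ : E →L[ℝ] ℝ)
    {x y : E} (hx : x ∈ C) (hy : y ∈ C) (hxy : ℓ x ≠ ℓ y) :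
    ℓ '' C = Set.Ioo (sInf (ℓ '' C)) (sSup (ℓ '' C)) := by
  have himage : Bornology.IsBounded (ℓ '' C) := ℓ.lipschitz.isBounded_image hbdd
  have hconn : IsConnected (ℓ '' C) :=
    ⟨⟨_, Set.mem_image_of_mem ℓ hx⟩, (hC.convex.linear_image ℓ.toLinearMap).isPreconnected⟩
  refine Set.Subset.antisymm ?_ (hconn.Ioo_csInf_csSup_subset himage.bddBelow himage.bddAbove)
  rintro _ ⟨z, hz, rfl⟩
  obtain ⟨w, hw, hzw⟩ : ∃ w ∈ C, ℓ w ≠ ℓ z := by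
    by_cases h : ℓ x = ℓ z
    · exact ⟨y, hy, fun h' ↦ hxy (h.trans h'.symm)⟩
    · exact ⟨x, hx, h⟩
  obtain ⟨ε, hε, hmem⟩ := hC.exists_forall_abs_le_add_smul_sub_mem hz hw
  have hvalue : ∀ t, |t| ≤ ε → ℓ z + t * (ℓ w - ℓ z) ∈ ℓ '' C := fun t ht ↦
    ⟨_, hmem t ht, by simp⟩
  have hplus := hvalue ε (abs_of_pos hε).le
  have hminus := hvalue (-ε) (by rw [abs_neg, abs_of_pos hε])
  constructor
  · rcases lt_or_gt_of_ne hzw with h | h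
    · exact (csInf_le himage.bddBelow hplus).trans_lt (by nlinarith)
    · exact (csInf_le himage.bddBelow hminus).trans_lt (by nlinarith)
  · rcases lt_or_gt_of_ne hzw with h | h
    · exact lt_of_lt_of_le (by nlinarith) (le_csSup himage.bddAbove hminus)
    · exact lt_of_lt_of_le (by nlinarith) (le_csSup himage.bddAbove hplus)

lemma eventually_convexEulerChar_slice_sub [FiniteDimensional ℝ E] (hC : IsRelOpenConvex C)
    (hbdd : Bornology.IsBounded C) (ℓ : E →L[ℝ] ℝ) (t : ℝ) :
    ∀ᶠ δ in nhdsWithin (0 : ℝ) (Set.Ioi 0),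
      convexEulerChar (C ∩ ℓ ⁻¹' {t}) - convexEulerChar (C ∩ ℓ ⁻¹' {t + δ}) =
        if t = sInf (ℓ '' C) then convexEulerChar C else 0 := by
  have hempty : ∀ u, u ∉ ℓ '' C → convexEulerChar (C ∩ ℓ ⁻¹' {u}) = 0 := fun u hu ↦
    if_neg fun ⟨z, hz⟩ ↦ hu ⟨z, hz⟩
  by_cases hconst : ∃ a, ∀ z ∈ C, ℓ z = a
  · obtain ⟨a, ha⟩ := hconst
    rcases C.eq_empty_or_nonempty with rfl | hne
    · simp [convexEulerChar_empty]
    have himage : ℓ '' C = {a} :=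
      (hne.image ℓ).subset_singleton_iff.1 (Set.image_subset_iff.2 ha)
    have hslice : C ∩ ℓ ⁻¹' {a} = C := Set.inter_eq_left.2 ha
    filter_upwards [eventually_add_ne t a] with δ hδ
    rw [himage, csInf_singleton, hempty (t + δ) (by rwa [himage]), sub_zero]
    split_ifs with h
    · rw [h, hslice]
    · exact hempty t (by rwa [himage])
  · push Not at hconst
    obtain ⟨x, hx, -⟩ := hconst 0
    obtain ⟨y, hy, hxy⟩ := hconst (ℓ x)
    have himage : ∀ u, u ∈ ℓ '' C ↔ u ∈ Set.Ioo (sInf (ℓ '' C)) (sSup (ℓ '' C)) :=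
      Set.ext_iff.1 (hC.image_eq_Ioo hbdd ℓ hy hx hxy)
    have hslice : ∀ u, convexEulerChar (C ∩ ℓ ⁻¹' {u}) =
        if u ∈ ℓ '' C then -convexEulerChar C else 0 := fun u ↦ by
      split_ifs with hu
      · exact hC.convexEulerChar_inter_preimage_singleton ℓ.toLinearMap hy hx hxy hu
      · exact hempty u hu
    have hlt : sInf (ℓ '' C) < sSup (ℓ '' C) :=
      Set.nonempty_Ioo.1 ⟨_, (himage (ℓ x)).1 (Set.mem_image_of_mem ℓ hx)⟩
    filter_upwards [eventually_add_mem_Ioo_iff t (sInf (ℓ '' C)) (sSup (ℓ '' C))] with δ hδ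
    simp only [hslice, himage, hδ, Set.mem_Ioo, Set.mem_Ico]
    grind

end IsRelOpenConvex

section Partition

variable {ι : Type*} {J : Finset ι} {C : ι → Set E}

lemma sum_convexEulerChar_of_subsingleton (hD : D.Subsingleton) (hCD : ∀ j ∈ J, C j ⊆ D)
    (hpart : ∀ x ∈ D, ∃! j, j ∈ J ∧ x ∈ C j) :
    ∑ j ∈ J, convexEulerChar (C j) = convexEulerChar D := by
  rcases hD.eq_empty_or_singleton with rfl | ⟨p, rfl⟩
  · rw [convexEulerChar_empty]
    exact Finset.sum_eq_zero fun j hj ↦ by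
      rw [Set.subset_empty_iff.1 (hCD j hj), convexEulerChar_empty]
  · obtain ⟨i, ⟨hi, hpi⟩, hunique⟩ := hpart p rfl
    rw [Finset.sum_eq_single_of_mem i hi fun j hj hji ↦ ?_,
      (hCD i hi).antisymm (Set.singleton_subset_iff.2 hpi)]
    rcases Set.subset_singleton_iff_eq.1 (hCD j hj) with h | h
    · rw [h, convexEulerChar_empty]
    · exact absurd (hunique j ⟨hj, h ▸ rfl⟩) hji

variable [FiniteDimensional ℝ E]

-- Hadwiger's argument: the Euler characteristic is the sum of the jumps of that of the slices.
lemma sum_convexEulerChar_of_slices (hC : ∀ j ∈ J, IsRelOpenConvex (C j))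
    (hD : IsRelOpenConvex D) (hbdd : Bornology.IsBounded D) (hCD : ∀ j ∈ J, C j ⊆ D)
    (ℓ : E →L[ℝ] ℝ) (hslice : ∀ t, ∑ j ∈ J, convexEulerChar (C j ∩ ℓ ⁻¹' {t}) =
      convexEulerChar (D ∩ ℓ ⁻¹' {t})) :
    ∑ j ∈ J, convexEulerChar (C j) = convexEulerChar D := by
  set T : Finset ℝ := insert (sInf (ℓ '' D)) (J.image fun j ↦ sInf (ℓ '' C j))
  have hjump := (Filter.eventually_all_finset T).2 fun t _ ↦
    (Filter.eventually_all_finset J).2 fun j hj ↦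
      (hC j hj).eventually_convexEulerChar_slice_sub (hbdd.subset (hCD j hj)) ℓ t
  have hjumpD := (Filter.eventually_all_finset T).2 fun t _ ↦
    hD.eventually_convexEulerChar_slice_sub hbdd ℓ t
  obtain ⟨δ, hδ, hδD⟩ := (hjump.and hjumpD).exists
  calc ∑ j ∈ J, convexEulerChar (C j)
      = ∑ j ∈ J, ∑ t ∈ T, (convexEulerChar (C j ∩ ℓ ⁻¹' {t}) -
          convexEulerChar (C j ∩ ℓ ⁻¹' {t + δ})) := Finset.sum_congr rfl fun j hj ↦ by
        have hmem : sInf (ℓ '' C j) ∈ T :=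
          Finset.mem_insert_of_mem (Finset.mem_image_of_mem _ hj)
        rw [Finset.sum_congr rfl fun t ht ↦ hδ t ht j hj, Finset.sum_ite_eq', if_pos hmem]
    _ = ∑ t ∈ T, (convexEulerChar (D ∩ ℓ ⁻¹' {t}) - convexEulerChar (D ∩ ℓ ⁻¹' {t + δ})) := by
        rw [Finset.sum_comm]
        simp only [Finset.sum_sub_distrib, hslice]
    _ = convexEulerChar D := by
        rw [Finset.sum_congr rfl hδD, Finset.sum_ite_eq', if_pos (Finset.mem_insert_self _ _)]

lemma sum_convexEulerChar_of_separating (F : Finset (E →L[ℝ] ℝ))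
    (hC : ∀ j ∈ J, IsRelOpenConvex (C j)) (hD : IsRelOpenConvex D) (hbdd : Bornology.IsBounded D)
    (hF : ∀ x ∈ D, ∀ y ∈ D, (∀ ℓ ∈ F, ℓ x = ℓ y) → x = y) (hCD : ∀ j ∈ J, C j ⊆ D)
    (hpart : ∀ x ∈ D, ∃! j, j ∈ J ∧ x ∈ C j) :
    ∑ j ∈ J, convexEulerChar (C j) = convexEulerChar D := by
  induction F using Finset.induction_on generalizing C D with
  | empty =>
    exact sum_convexEulerChar_of_subsingleton (fun x hx y hy ↦ hF x hx y hy (by simp)) hCD hpart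
  | insert ℓ F _ ih =>
    refine sum_convexEulerChar_of_slices hC hD hbdd hCD ℓ fun t ↦
      ih (fun j hj ↦ (hC j hj).inter_preimage_singleton ℓ.toLinearMap t)
        (hD.inter_preimage_singleton ℓ.toLinearMap t) (hbdd.subset Set.inter_subset_left)
        (fun x hx y hy hxy ↦ hF x hx.1 y hy.1 ?_)
        (fun j hj ↦ Set.inter_subset_inter_left _ (hCD j hj)) (fun x hx ↦ ?_)
    · exact (Finset.forall_mem_insert _ _ _).2 ⟨hx.2.trans hy.2.symm, hxy⟩
    · have hxt : ℓ x = t := hx.2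
      simpa [hxt] using hpart x hx.1

theorem sum_convexEulerChar (hC : ∀ j ∈ J, IsRelOpenConvex (C j)) (hD : IsRelOpenConvex D)
    (hbdd : Bornology.IsBounded D) (hCD : ∀ j ∈ J, C j ⊆ D)
    (hpart : ∀ x ∈ D, ∃! j, j ∈ J ∧ x ∈ C j) :
    ∑ j ∈ J, convexEulerChar (C j) = convexEulerChar D := by
  set b := Module.finBasis ℝ E
  refine sum_convexEulerChar_of_separating
    (Finset.univ.image fun i ↦ LinearMap.toContinuousLinearMap (b.coord i)) hC hD hbdd
    (fun x _ y _ hF ↦ b.ext_elem fun i ↦ ?_) hCD hpart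
  exact hF _ (Finset.mem_image_of_mem _ (Finset.mem_univ i))

end Partition

end EulerCharacteristicAdditivity

section OpenSimplexEulerCharacteristic

namespace IsSimplex

variable {s t : Finset (Euc N)} {x : Euc N}

lemma openSimplex_eq_inter (hs : IsSimplex s) :
    openSimplex s = (affineSpan ℝ (s : Set (Euc N)) : Set (Euc N)) ∩
      ⋂ v ∈ s, baryCoord s v ⁻¹' Set.Ioi 0 := by
  ext x
  simp [hs.mem_openSimplex_iff]

lemma isRelOpenConvex_openSimplex (hs : IsSimplex s) : IsRelOpenConvex (openSimplex s) where
  convex := by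
    rw [hs.openSimplex_eq_inter]
    exact (AffineSubspace.convex _).inter <| convex_iInter₂ fun v _ ↦
      (convex_Ioi 0).affine_preimage (baryCoord s v)
  exists_prolongation x hx y hy := by
    rw [hs.mem_openSimplex_iff] at hx hy
    have hpos : ∀ᶠ z in nhds x, ∀ v ∈ s, 0 < baryCoord s v z :=
      (Filter.eventually_all_finset s).2 fun v hv ↦
        (continuous_baryCoord s v).continuousAt.eventually (lt_mem_nhds (hx.2 v hv))
    obtain ⟨ε, hε, hmem⟩ := (eventually_mem_nhdsWithin.and
      ((tendsto_add_smul_nhdsGT_zero x (x - y)).eventually hpos)).exists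
    refine ⟨ε, hε, hs.mem_openSimplex_iff.2 ⟨?_, hmem⟩⟩
    rw [show x + ε • (x - y) = AffineMap.lineMap x y (-ε) by
      rw [AffineMap.lineMap_apply_module]; module]
    exact AffineMap.lineMap_mem _ hx.1 hy.1

lemma vectorSpan_openSimplex (hs : IsSimplex s) :
    vectorSpan ℝ (openSimplex s) = vectorSpan ℝ (s : Set (Euc N)) := by
  rw [← direction_affineSpan, ← direction_affineSpan]
  congr 1
  refine le_antisymm (affineSpan_le.2 fun x hx ↦ (hs.mem_openSimplex_iff.1 hx).1)
    (affineSpan_le.2 ?_)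
  exact (subset_convexHull ℝ _).trans <| hs.convexHull_subset_of_openSimplex_subset
    (AffineSubspace.closed_of_finiteDimensional _) (subset_affineSpan ℝ _)

lemma convexEulerChar_openSimplex_inter_ball (hs : IsSimplex s)
    (hx : x ∈ convexHull ℝ (s : Set (Euc N))) {ε : ℝ} (hε : 0 < ε) :
    convexEulerChar (openSimplex s ∩ Metric.ball x ε) = (-1) ^ (s.card + 1) := by
  have hne : (openSimplex s ∩ Metric.ball x ε).Nonempty := by
    rw [Set.inter_comm]
    by_contra hempty
    refine (hs.convexHull_subset_of_openSimplex_subset Metric.isOpen_ball.isClosed_compl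
      fun z hz hzε ↦ hempty ⟨z, hzε, hz⟩) hx (Metric.mem_ball_self hε)
  rw [hs.isRelOpenConvex_openSimplex.convexEulerChar_inter_isOpen Metric.isOpen_ball hne,
    convexEulerChar, if_pos hne.left, hs.vectorSpan_openSimplex, ← hs.finrank_vectorSpan_add_one,
    pow_succ, pow_succ]
  ring

lemma exists_face_mem_openSimplex (hs : IsSimplex s) (hx : x ∈ convexHull ℝ (s : Set (Euc N))) :
    ∃ t ⊆ s, t.Nonempty ∧ x ∈ openSimplex t := by
  obtain ⟨hx_span, hnonneg⟩ := hs.mem_convexHull_iff.1 hx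
  set t := s.filter (fun v ↦ 0 < baryCoord s v x)
  have hts : t ⊆ s := Finset.filter_subset _ _
  have hzero : ∀ v ∈ s, v ∉ t → baryCoord s v x = 0 := fun v hv hvt ↦
    (hnonneg v hv).antisymm' <| not_lt.1 fun hpos ↦ hvt (Finset.mem_filter.2 ⟨hv, hpos⟩)
  have hsum : ∑ v ∈ t, baryCoord s v x = 1 :=
    (Finset.sum_subset hts hzero).trans (hs.sum_baryCoord hx_span)
  have hsmul : ∑ v ∈ t, baryCoord s v x • v = x :=
    (Finset.sum_subset hts fun v hv hvt ↦ by rw [hzero v hv hvt, zero_smul]).trans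
      (hs.sum_baryCoord_smul hx_span)
  have htne : t.Nonempty := Finset.nonempty_of_sum_ne_zero (hsum.trans_ne one_ne_zero)
  have hxt : x ∈ affineSpan ℝ (t : Set (Euc N)) := convexHull_subset_affineSpan _ <| hsmul ▸
    (convex_convexHull ℝ _).sum_mem (fun v hv ↦ hnonneg v (hts hv)) hsum
      fun v hv ↦ subset_convexHull ℝ _ hv
  have ht : IsSimplex t := hs.mono htne hts
  refine ⟨t, hts, htne, ht.mem_openSimplex_iff.2 ⟨hxt, fun v hv ↦ ?_⟩⟩
  have hcoord := hs.baryCoord_of_mem_affineSpan_face ht hts hxt (hts hv)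
  rw [if_pos hv] at hcoord
  exact hcoord ▸ (Finset.mem_filter.1 hv).2

lemma affineSpan_le_of_openSimplex_subset (hs : IsSimplex s)
    (hst : openSimplex s ⊆ openSimplex t) :
    affineSpan ℝ (s : Set (Euc N)) ≤ affineSpan ℝ (t : Set (Euc N)) :=
  affineSpan_le.2 <| (subset_convexHull ℝ _).trans <|
    hs.convexHull_subset_of_openSimplex_subset (AffineSubspace.closed_of_finiteDimensional _) <|
      hst.trans <| intrinsicInterior_subset.trans (convexHull_subset_affineSpan _)

lemma card_le_of_openSimplex_subset (hs : IsSimplex s) (ht : IsSimplex t)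
    (hst : openSimplex s ⊆ openSimplex t) : s.card ≤ t.card := by
  rw [← hs.finrank_vectorSpan_add_one, ← ht.finrank_vectorSpan_add_one, ← direction_affineSpan,
    ← direction_affineSpan]
  gcongr
  exact Submodule.finrank_mono
    (AffineSubspace.direction_le (hs.affineSpan_le_of_openSimplex_subset hst))

lemma affineSpan_eq_of_openSimplex_subset (hs : IsSimplex s) (ht : IsSimplex t)
    (hst : openSimplex s ⊆ openSimplex t) (hcard : s.card = t.card) :
    affineSpan ℝ (s : Set (Euc N)) = affineSpan ℝ (t : Set (Euc N)) := by
  have hle := hs.affineSpan_le_of_openSimplex_subset hst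
  refine AffineSubspace.eq_of_direction_eq_of_nonempty_of_le ?_
    ((affineSpan_nonempty ℝ).2 (Finset.coe_nonempty.2 hs.nonempty)) hle
  refine Submodule.eq_of_le_of_finrank_eq (AffineSubspace.direction_le hle) ?_
  rw [direction_affineSpan, direction_affineSpan]
  have := hs.finrank_vectorSpan_add_one
  have := ht.finrank_vectorSpan_add_one
  omega

end IsSimplex

end OpenSimplexEulerCharacteristic

section Complex

variable {K : SimplicialComplex ℝ (Euc N)} {s t : Finset (Euc N)} {x : Euc N}

lemma isSimplex_of_mem_faces (hs : s ∈ K.faces) : IsSimplex s :=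
  ⟨SimplicialComplex.nonempty_of_mem_faces hs, K.indep hs⟩

lemma subset_of_mem_openSimplex_of_mem_convexHull (hs : s ∈ K.faces) (ht : t ∈ K.faces)
    (hxs : x ∈ openSimplex s) (hxt : x ∈ convexHull ℝ (t : Set (Euc N))) : s ⊆ t := by
  intro v hv
  have hx : x ∈ convexHull ℝ (↑(s ∩ t) : Set (Euc N)) := by
    rw [Finset.coe_inter]
    exact K.inter_subset_convexHull hs ht ⟨intrinsicInterior_subset hxs, hxt⟩
  have hne : (s ∩ t).Nonempty := by
    rw [← Finset.coe_nonempty, ← convexHull_nonempty_iff (𝕜 := ℝ)]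
    exact ⟨x, hx⟩
  have hface := isSimplex_of_mem_faces hs
  have hcoord := hface.baryCoord_of_mem_affineSpan_face (hface.mono hne Finset.inter_subset_left)
    Finset.inter_subset_left (convexHull_subset_affineSpan _ hx) hv
  by_contra hvt
  rw [if_neg fun h ↦ hvt (Finset.mem_inter.1 h).2] at hcoord
  exact (hface.baryCoord_pos_of_mem_openSimplex hxs hv).ne' hcoord

lemma eq_of_mem_openSimplex (hs : s ∈ K.faces) (ht : t ∈ K.faces) (hxs : x ∈ openSimplex s)
    (hxt : x ∈ openSimplex t) : s = t :=
  (subset_of_mem_openSimplex_of_mem_convexHull hs ht hxs (intrinsicInterior_subset hxt)).antisymm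
    (subset_of_mem_openSimplex_of_mem_convexHull ht hs hxt (intrinsicInterior_subset hxs))

lemma exists_mem_faces_mem_openSimplex (hx : x ∈ K.space) :
    ∃ t ∈ K.faces, x ∈ openSimplex t := by
  obtain ⟨s, hs, hxs⟩ := SimplicialComplex.mem_space_iff.1 hx
  obtain ⟨t, hts, htne, hxt⟩ := (isSimplex_of_mem_faces hs).exists_face_mem_openSimplex hxs
  exact ⟨t, K.down_closed hs hts htne, hxt⟩

lemma eventually_forall_mem_convexHull_imp (hfin : K.faces.Finite) (x : Euc N) :
    ∀ᶠ z in nhds x, ∀ s ∈ K.faces, z ∈ convexHull ℝ (s : Set (Euc N)) →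
      x ∈ convexHull ℝ (s : Set (Euc N)) := by
  refine hfin.eventually_all.2 fun s _ ↦ ?_
  by_cases hx : x ∈ convexHull ℝ (s : Set (Euc N))
  · exact Eventually.of_forall fun _ _ ↦ hx
  · filter_upwards [(s.finite_toSet.isClosed_convexHull ℝ).isOpen_compl.mem_nhds hx] with z hz hzs
    exact absurd hzs hz

/-- The open star of `τ` in `L`, restricted to the part of `L` subdividing the open simplex `ρ`:
the simplices of `L` that have `τ` as a face and lie in `ρ`. -/
def starIn (L : SimplicialComplex ℝ (Euc N)) (τ ρ : Finset (Euc N)) : Set (Finset (Euc N)) :=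
  {η | η ∈ L.faces ∧ τ ⊆ η ∧ openSimplex η ⊆ openSimplex ρ}

lemma mem_filter_starIn {L : SimplicialComplex ℝ (Euc N)} {τ ρ η : Finset (Euc N)}
    (hfin : L.faces.Finite) :
    η ∈ hfin.toFinset.filter (· ∈ starIn L τ ρ) ↔ η ∈ starIn L τ ρ := by
  simp only [Finset.mem_filter, hfin.mem_toFinset]
  exact and_iff_right_of_imp fun h ↦ h.1

end Complex

namespace IsSubdivision

variable {K L : SimplicialComplex ℝ (Euc N)} {τ ρ : Finset (Euc N)} {x : Euc N}

lemma eventually_existsUnique_mem_starIn (hsub : IsSubdivision K L) (hfin : L.faces.Finite)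
    (hτ : τ ∈ L.faces) (hρ : ρ ∈ K.faces) (hx : x ∈ openSimplex τ) :
    ∀ᶠ z in nhds x, z ∈ openSimplex ρ → ∃! η, η ∈ starIn L τ ρ ∧ z ∈ openSimplex η := by
  filter_upwards [eventually_forall_mem_convexHull_imp hfin x] with z hz hzρ
  have hzL : z ∈ L.space :=
    hsub.1 ▸ SimplicialComplex.convexHull_subset_space hρ (intrinsicInterior_subset hzρ)
  obtain ⟨η, hη, hzη⟩ := exists_mem_faces_mem_openSimplex hzL
  obtain ⟨ρ', hρ', hηρ⟩ := hsub.2 η hη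
  obtain rfl := eq_of_mem_openSimplex hρ' hρ (hηρ hzη) hzρ
  have hτη : τ ⊆ η := subset_of_mem_openSimplex_of_mem_convexHull hτ hη hx
    (hz η hη (intrinsicInterior_subset hzη))
  exact ⟨η, ⟨⟨hη, hτη, hηρ⟩, hzη⟩, fun η' h ↦ eq_of_mem_openSimplex h.1.1 hη h.2 hzη⟩

lemma sum_starIn_neg_one_pow (hsub : IsSubdivision K L) (hfin : L.faces.Finite)
    (hτ : τ ∈ L.faces) (hρ : ρ ∈ K.faces) (hx : x ∈ openSimplex τ)
    (hxρ : x ∈ convexHull ℝ (ρ : Set (Euc N))) :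
    ∑ η ∈ hfin.toFinset with η ∈ starIn L τ ρ, (-1 : ℝ) ^ (η.card + 1) =
      (-1) ^ (ρ.card + 1) := by
  obtain ⟨ε, hε, hpart⟩ := Metric.eventually_nhds_iff_ball.1
    (hsub.eventually_existsUnique_mem_starIn hfin hτ hρ hx)
  have hball := isRelOpenConvex_of_isOpen (convex_ball x ε) Metric.isOpen_ball
  have hchar : ∀ η ∈ hfin.toFinset.filter (· ∈ starIn L τ ρ),
      convexEulerChar (openSimplex η ∩ Metric.ball x ε) = (-1) ^ (η.card + 1) := fun η hη ↦ by
    obtain ⟨hηL, hτη, -⟩ := (mem_filter_starIn hfin).1 hη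
    exact (isSimplex_of_mem_faces hηL).convexEulerChar_openSimplex_inter_ball
      (convexHull_mono (Finset.coe_subset.2 hτη) (intrinsicInterior_subset hx)) hε
  rw [← Finset.sum_congr rfl hchar,
    ← (isSimplex_of_mem_faces hρ).convexEulerChar_openSimplex_inter_ball hxρ hε]
  refine sum_convexEulerChar (fun η hη ↦ ?_)
    ((isSimplex_of_mem_faces hρ).isRelOpenConvex_openSimplex.inter hball)
    (Metric.isBounded_ball.subset Set.inter_subset_right)
    (fun η hη ↦ Set.inter_subset_inter_left _ ((mem_filter_starIn hfin).1 hη).2.2)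
    (fun z ⟨hzρ, hzε⟩ ↦ ?_)
  · have hηL := ((mem_filter_starIn hfin).1 hη).1
    exact (isSimplex_of_mem_faces hηL).isRelOpenConvex_openSimplex.inter hball
  · simpa only [mem_filter_starIn, Set.mem_inter_iff, hzε, and_true] using hpart z hzε hzρ

end IsSubdivision

lemma subset_of_openSimplex_subset {K : SimplicialComplex ℝ (Euc N)} {τ ζ η ρ : Finset (Euc N)}
    (hζ : ζ ∈ K.faces) (hρ : ρ ∈ K.faces) (hτ : IsSimplex τ) (hη : IsSimplex η)
    (hτζ : openSimplex τ ⊆ openSimplex ζ) (hτη : τ ⊆ η) (hηρ : openSimplex η ⊆ openSimplex ρ) :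
    ζ ⊆ ρ := by
  have hηρ' : convexHull ℝ (η : Set (Euc N)) ⊆ convexHull ℝ (ρ : Set (Euc N)) :=
    hη.convexHull_subset_of_openSimplex_subset (ρ.finite_toSet.isClosed_convexHull ℝ)
      (hηρ.trans intrinsicInterior_subset)
  have hcentroid := hτ.centroid_mem_openSimplex
  exact subset_of_mem_openSimplex_of_mem_convexHull hζ hρ (hτζ hcentroid) <| hηρ' <|
    convexHull_mono (Finset.coe_subset.2 hτη) (intrinsicInterior_subset hcentroid)

section AngleAdditivity

namespace IsSimplex

variable {σ η ρ : Finset (Euc N)} {v : Euc N}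

lemma volume_setOf_baryCoord_eq_zero (hσ : IsSimplex σ) (hv : v ∈ σ) :
    volume {y | baryCoord σ v y = 0} = 0 := by
  have hpre : {y | baryCoord σ v y = 0} =
      ((AffineSubspace.mk' (0 : ℝ) ⊥).comap (baryCoord σ v) : Set (Euc N)) := by
    ext y
    simp [AffineSubspace.mem_mk']
  rw [hpre]
  refine Measure.addHaar_affineSubspace volume _ fun htop ↦ ?_
  have hmem : v ∈ (AffineSubspace.mk' (0 : ℝ) ⊥).comap (baryCoord σ v) := htop ▸ trivial
  simp [AffineSubspace.mem_mk', hσ.baryCoord_vertex hv hv] at hmem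

lemma setOf_baryCoord_nonneg_ae_eq (hσ : IsSimplex σ) :
    {y | ∀ v ∈ σ, 0 ≤ baryCoord σ v y} =ᵐ[volume] {y | ∀ v ∈ σ, 0 < baryCoord σ v y} := by
  have hne : ∀ᵐ y : Euc N, ∀ v ∈ σ, baryCoord σ v y ≠ 0 :=
    (Filter.eventually_all_finset σ).2 fun v hv ↦ by
      simpa [ae_iff] using hσ.volume_setOf_baryCoord_eq_zero hv
  filter_upwards [hne] with y hy
  exact propext <| forall₂_congr fun v hv ↦ (hy v hv).symm.le_iff_lt

lemma measurableSet_openSimplex (hσ : IsSimplex σ) : MeasurableSet (openSimplex σ) := by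
  rw [hσ.openSimplex_eq_inter]
  exact (AffineSubspace.closed_of_finiteDimensional _).measurableSet.inter <|
    Finset.measurableSet_biInter _ fun v _ ↦
      (isOpen_Ioi.preimage (continuous_baryCoord σ v)).measurableSet

lemma preimage_orthProj_openSimplex (hσ : IsSimplex σ) (hρ : IsSimplex ρ)
    (hspan : affineSpan ℝ (σ : Set (Euc N)) = affineSpan ℝ (ρ : Set (Euc N))) :
    hρ.orthProj ⁻¹' openSimplex σ = {y | ∀ v ∈ σ, 0 < baryCoord σ v y} := by
  ext y
  have horth : y - hρ.orthProj y ∈ (vectorSpan ℝ (σ : Set (Euc N)))ᗮ := by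
    rw [← direction_affineSpan, hspan, direction_affineSpan]
    exact hρ.sub_orthProj_mem_orthogonal y
  rw [Set.mem_preimage, hσ.mem_openSimplex_iff, hspan, and_iff_right (hρ.orthProj_mem y)]
  refine forall₂_congr fun v hv ↦ ?_
  rw [← hσ.baryCoord_add_orthogonal hv horth, add_sub_cancel]

lemma volume_preimage_orthProj_openSimplex (hη : IsSimplex η) (hρ : IsSimplex ρ)
    (hcard : η.card < ρ.card) : volume (hρ.orthProj ⁻¹' openSimplex η) = 0 := by
  obtain ⟨z, hz, hzη⟩ : ∃ z ∈ ρ, z ∉ affineSpan ℝ (η : Set (Euc N)) := by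
    by_contra! hle
    have hfinrank := Submodule.finrank_mono (AffineSubspace.direction_le (affineSpan_le.2 hle))
    rw [direction_affineSpan, direction_affineSpan] at hfinrank
    have := hη.finrank_vectorSpan_add_one
    have := hρ.finrank_vectorSpan_add_one
    omega
  refine measure_mono_null (t := (affineSpan ℝ (η : Set (Euc N))).comap hρ.orthProj)
    (Set.preimage_mono fun y hy ↦ (hη.mem_openSimplex_iff.1 hy).1) <|
    Measure.addHaar_affineSubspace volume _ fun htop ↦ hzη ?_
  have hmem : z ∈ (affineSpan ℝ (η : Set (Euc N))).comap hρ.orthProj := htop ▸ trivial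
  rwa [AffineSubspace.mem_comap, hρ.orthProj_eq_self (subset_affineSpan ℝ _ hz)] at hmem

lemma measureReal_inter_setOf_baryCoord_nonneg (hσ : IsSimplex σ) (hρ : IsSimplex ρ)
    (hspan : affineSpan ℝ (σ : Set (Euc N)) = affineSpan ℝ (ρ : Set (Euc N)))
    (B : Set (Euc N)) :
    volume.real (B ∩ {y | ∀ v ∈ σ, 0 ≤ baryCoord σ v y}) =
      volume.real (B ∩ hρ.orthProj ⁻¹' openSimplex σ) := by
  rw [hσ.preimage_orthProj_openSimplex hρ hspan]
  exact measureReal_congr ((ae_eq_refl B).inter hσ.setOf_baryCoord_nonneg_ae_eq)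

end IsSimplex

namespace IsSubdivision

variable {K L : SimplicialComplex ℝ (Euc N)} {τ ζ ρ : Finset (Euc N)} {x : Euc N}

lemma eventually_measureReal_ball_inter_eq_sum (hsub : IsSubdivision K L)
    (hfin : L.faces.Finite) (hτ : τ ∈ L.faces) (hρK : ρ ∈ K.faces) (hρ : IsSimplex ρ)
    (hx : x ∈ openSimplex τ) (hxρ : hρ.orthProj x = x) :
    ∀ᶠ ε in nhdsWithin 0 (Set.Ioi 0),
      volume.real (Metric.ball x ε ∩ hρ.orthProj ⁻¹' openSimplex ρ) =
        ∑ η ∈ hfin.toFinset with η ∈ starIn L τ ρ,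
          volume.real (Metric.ball x ε ∩ hρ.orthProj ⁻¹' openSimplex η) := by
  have hcover := ((hρ.continuous_orthProj.tendsto' x x hxρ).eventually
    (hsub.eventually_existsUnique_mem_starIn hfin hτ hρK hx))
  obtain ⟨δ, hδ, hball⟩ := Metric.eventually_nhds_iff_ball.1 hcover
  filter_upwards [nhdsWithin_le_nhds (gt_mem_nhds hδ)] with ε hε
  have hunion : Metric.ball x ε ∩ hρ.orthProj ⁻¹' openSimplex ρ =
      ⋃ η ∈ hfin.toFinset.filter (· ∈ starIn L τ ρ),
        Metric.ball x ε ∩ hρ.orthProj ⁻¹' openSimplex η := by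
    ext y
    simp only [Set.mem_inter_iff, Set.mem_iUnion, Set.mem_preimage, mem_filter_starIn]
    constructor
    · rintro ⟨hy, hyρ⟩
      obtain ⟨η, ⟨hη, hyη⟩, -⟩ := hball y (Metric.ball_subset_ball hε.le hy) hyρ
      exact ⟨η, hη, hy, hyη⟩
    · rintro ⟨η, hη, hy, hyη⟩
      exact ⟨hy, hη.2.2 hyη⟩
  rw [hunion, measureReal_biUnion_finset]
  · intro η hη η' hη' hne
    refine Set.disjoint_left.2 fun y hy hy' ↦ hne ?_
    exact eq_of_mem_openSimplex ((mem_filter_starIn hfin).1 hη).1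
      ((mem_filter_starIn hfin).1 hη').1 hy.2 hy'.2
  · intro η hη
    have hηL := ((mem_filter_starIn hfin).1 hη).1
    exact measurableSet_ball.inter ((isSimplex_of_mem_faces hηL).measurableSet_openSimplex.preimage
      hρ.continuous_orthProj.measurable)

lemma sum_measureReal_starIn_eq_sum_card_eq (hfin : L.faces.Finite) (hρ : IsSimplex ρ)
    (B : Set (Euc N)) :
    ∑ η ∈ hfin.toFinset with η ∈ starIn L τ ρ, volume.real (B ∩ hρ.orthProj ⁻¹' openSimplex η) =
      ∑ σ ∈ hfin.toFinset with σ ∈ starIn L τ ρ ∧ σ.card = ρ.card,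
        volume.real (B ∩ {y | ∀ v ∈ σ, 0 ≤ baryCoord σ v y}) := by
  rw [← Finset.filter_filter]
  refine (Finset.sum_subset_zero_on_sdiff (Finset.filter_subset _ _) (fun η hη ↦ ?_)
    fun σ hσ ↦ ?_).symm
  · obtain ⟨hηstar, hcard⟩ := Finset.mem_sdiff.1 hη
    obtain ⟨hηL, -, hηρ⟩ := (mem_filter_starIn hfin).1 hηstar
    have hη := isSimplex_of_mem_faces hηL
    have hlt : η.card < ρ.card := (hη.card_le_of_openSimplex_subset hρ hηρ).lt_of_ne fun h ↦
      hcard (Finset.mem_filter.2 ⟨hηstar, h⟩)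
    rw [measureReal_def, measure_mono_null Set.inter_subset_right
      (hη.volume_preimage_orthProj_openSimplex hρ hlt), ENNReal.toReal_zero]
  · obtain ⟨hσstar, hcard⟩ := Finset.mem_filter.1 hσ
    obtain ⟨hσL, -, hσρ⟩ := (mem_filter_starIn hfin).1 hσstar
    have hσ := isSimplex_of_mem_faces hσL
    exact hσ.measureReal_inter_setOf_baryCoord_nonneg hρ
      (hσ.affineSpan_eq_of_openSimplex_subset hρ hσρ hcard) B

lemma solidAngle_eq_sum_starIn (hsub : IsSubdivision K L) (hfin : L.faces.Finite)
    (hτ : τ ∈ L.faces) (hζ : ζ ∈ K.faces) (hρ : ρ ∈ K.faces)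
    (hτζ : openSimplex τ ⊆ openSimplex ζ) (hζρ : ζ ⊆ ρ) :
    solidAngle ζ ρ =
      ∑ σ ∈ hfin.toFinset with σ ∈ starIn L τ ρ ∧ σ.card = ρ.card, solidAngle τ σ := by
  have hτs := isSimplex_of_mem_faces hτ
  have hζs := isSimplex_of_mem_faces hζ
  have hρs := isSimplex_of_mem_faces hρ
  obtain ⟨x, hx⟩ : ∃ x, x ∈ openSimplex τ := ⟨_, hτs.centroid_mem_openSimplex⟩
  have hxρ : hρs.orthProj x = x := hρs.orthProj_eq_self <|
    affineSpan_mono ℝ (Finset.coe_subset.2 hζρ) (hζs.mem_openSimplex_iff.1 (hτζ hx)).1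
  have hangles : ∀ᶠ ε in nhdsWithin 0 (Set.Ioi 0),
      ∀ σ ∈ hfin.toFinset.filter (fun σ ↦ σ ∈ starIn L τ ρ ∧ σ.card = ρ.card),
        volume.real (Metric.ball x ε ∩ {y | ∀ v ∈ σ, 0 ≤ baryCoord σ v y}) /
          volume.real (Metric.ball x ε) = solidAngle τ σ := by
    refine (Filter.eventually_all_finset _).2 fun σ hσ ↦ ?_
    obtain ⟨hσL, hτσ, -⟩ := (Finset.mem_filter.1 hσ).2.1
    exact (isSimplex_of_mem_faces hσL).eventually_ballFraction_eq_solidAngle hτs hτσ hx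
  obtain ⟨ε, hsum, hσ, hangle⟩ :=
    ((hsub.eventually_measureReal_ball_inter_eq_sum hfin hτ hρ hρs hx hxρ).and <|
      hangles.and <| hρs.eventually_ballFraction_eq_solidAngle hζs hζρ (hτζ hx)).exists
  rw [← hangle, ← Finset.sum_congr rfl hσ, ← Finset.sum_div,
    ← sum_measureReal_starIn_eq_sum_card_eq hfin hρs, ← hsum,
    hρs.measureReal_inter_setOf_baryCoord_nonneg hρs rfl]

end IsSubdivision

end AngleAdditivity

section ConeNeighborhood

variable {n r : ℕ} {p : ℝ × ℝ} {δ : ℝ} {S T : Set (Euc N)} {x y : Euc N}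

lemma mem_Tcone_iff :
    p ∈ Tcone r ↔ p = 0 ∨ ∃ k < r, ∃ t : ℝ, 0 ≤ t ∧ t < 1 ∧ p = t • ((1 : ℝ), (k : ℝ)) := by
  simp [Tcone]

lemma zero_mem_Tcone : (0 : ℝ × ℝ) ∈ Tcone r := Or.inl rfl

lemma smul_mem_Tcone (hp : p ∈ Tcone r) (hδ : 0 ≤ δ) (hδp : δ * p.1 < 1) : δ • p ∈ Tcone r := by
  rw [mem_Tcone_iff] at hp ⊢
  rcases hp with rfl | ⟨k, hk, t, ht, -, rfl⟩
  · exact Or.inl (smul_zero δ)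
  · exact Or.inr ⟨k, hk, δ * t, by positivity, by simpa using hδp, smul_smul δ t _⟩

lemma fst_lt_one_of_mem_Tcone (hp : p ∈ Tcone r) : p.1 < 1 := by
  rcases mem_Tcone_iff.1 hp with rfl | ⟨k, -, t, -, ht, rfl⟩
  · exact one_pos
  · simpa using ht

lemma norm_le_of_mem_Tcone (hp : p ∈ Tcone r) : ‖p‖ ≤ r + 1 := by
  rcases mem_Tcone_iff.1 hp with rfl | ⟨k, hk, t, ht, ht', rfl⟩
  · simpa using by positivity
  · have hkr : (k : ℝ) ≤ r := by exact_mod_cast hk.le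
    rw [norm_smul, Real.norm_of_nonneg ht, Prod.norm_mk, norm_one, Real.norm_natCast]
    calc t * max 1 (k : ℝ) ≤ 1 * max 1 (k : ℝ) := by gcongr
      _ ≤ r + 1 := by rw [one_mul, max_le_iff]; constructor <;> linarith [r.cast_nonneg (α := ℝ)]

/-- The apex of the cone `Tcone r`. -/
def Tcone.apex (r : ℕ) : Tcone r := ⟨0, zero_mem_Tcone⟩

/-- Contraction of the cone `Tcone r` towards its apex by a factor `δ ∈ (0, 1]`. -/
def Tcone.shrink (r : ℕ) (hδ : 0 < δ) (hδ' : δ ≤ 1) (p : Tcone r) : Tcone r :=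
  ⟨δ • (p : ℝ × ℝ), smul_mem_Tcone p.2 hδ.le <| by
    nlinarith [fst_lt_one_of_mem_Tcone p.2]⟩

lemma Tcone.range_shrink (hδ : 0 < δ) (hδ' : δ ≤ 1) :
    Set.range (Tcone.shrink r hδ hδ') = {p : Tcone r | (p : ℝ × ℝ).1 < δ} := by
  ext ⟨p, hp⟩
  constructor
  · rintro ⟨q, hq⟩
    rw [Set.mem_ofPred_eq, ← hq]
    simpa [Tcone.shrink] using mul_lt_of_lt_one_right hδ (fst_lt_one_of_mem_Tcone q.2)
  · intro hpδ
    refine ⟨⟨δ⁻¹ • p, smul_mem_Tcone hp (by positivity) ?_⟩, Subtype.ext (smul_inv_smul₀ hδ.ne' p)⟩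
    rwa [inv_mul_lt_iff₀ hδ, mul_one]

lemma Tcone.isOpenEmbedding_shrink (hδ : 0 < δ) (hδ' : δ ≤ 1) :
    Topology.IsOpenEmbedding (Tcone.shrink r hδ hδ') where
  toIsEmbedding := ((Homeomorph.smulOfNeZero δ hδ.ne').isEmbedding.comp
    Topology.IsEmbedding.subtypeVal).codRestrict (Tcone r) _
  isOpen_range := by
    rw [range_shrink]
    exact isOpen_lt (by fun_prop) continuous_const

lemma exists_isOpenEmbedding_Tcone_prod {m : ℕ} (v : EuclideanSpace ℝ (Fin m))
    {O : Set (Tcone r × EuclideanSpace ℝ (Fin m))} (hO : O ∈ nhds (Tcone.apex r, v)) :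
    ∃ g : Tcone r × EuclideanSpace ℝ (Fin m) → Tcone r × EuclideanSpace ℝ (Fin m),
      Topology.IsOpenEmbedding g ∧ g (Tcone.apex r, 0) = (Tcone.apex r, v) ∧ ∀ q, g q ∈ O := by
  obtain ⟨A, hA, B, hB, hAB⟩ := mem_nhds_prod_iff.1 hO
  obtain ⟨a, ha, haA⟩ := Metric.mem_nhds_iff.1 hA
  obtain ⟨b, hb, hbB⟩ := Metric.mem_nhds_iff.1 hB
  obtain ⟨δ, hδ, hδa⟩ := exists_pos_mul_lt ha (r + 1 : ℝ)
  have hmin : 0 < min δ 1 := lt_min hδ one_pos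
  set e := OpenPartialHomeomorph.univBall v b
  refine ⟨Prod.map (Tcone.shrink r hmin (min_le_right _ _)) e,
    (Tcone.isOpenEmbedding_shrink _ _).prodMap (e.isOpenEmbedding
      (OpenPartialHomeomorph.univBall_source v b)),
    Prod.ext (Subtype.ext (smul_zero _)) (OpenPartialHomeomorph.univBall_apply_zero v b),
    fun q ↦ hAB ⟨haA ?_, hbB ?_⟩⟩
  · rw [Metric.mem_ball, Subtype.dist_eq]
    simp only [Prod.map_fst, Tcone.apex, Tcone.shrink, dist_zero_right, norm_smul,
      Real.norm_of_nonneg hmin.le]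
    calc min δ 1 * ‖(q.1 : ℝ × ℝ)‖ ≤ δ * (r + 1) := by
          gcongr
          exacts [min_le_left _ _, norm_le_of_mem_Tcone q.1.2]
      _ < a := by rwa [mul_comm]
  · rw [← OpenPartialHomeomorph.univBall_target v hb]
    exact e.map_source (by simp [e])

namespace HasConeNbhd

lemma of_isEmbedding {φ : Tcone r × EuclideanSpace ℝ (Fin (n - 1)) → Euc N}
    (hφ : Topology.IsEmbedding φ) (hrange : Set.range φ ∈ nhdsWithin x S)
    (hS : Set.range φ ⊆ S) (hx : φ (Tcone.apex r, 0) = x) : HasConeNbhd n r S x := by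
  refine ⟨Set.range φ, hrange, hS, hφ.toHomeomorph.symm, fun hmem ↦ ?_⟩
  have hapex : (⟨x, hmem⟩ : Set.range φ) = hφ.toHomeomorph (Tcone.apex r, 0) :=
    Subtype.ext hx.symm
  rw [hapex, Homeomorph.symm_apply_apply]
  rfl

lemma exists_isEmbedding (h : HasConeNbhd n r S x) (hx : x ∈ S) {W : Set (Euc N)}
    (hW : W ∈ nhds x) :
    ∃ φ : Tcone r × EuclideanSpace ℝ (Fin (n - 1)) → Euc N, Topology.IsEmbedding φ ∧
      Set.range φ ∈ nhdsWithin x S ∧ Set.range φ ⊆ S ∩ W ∧ φ (Tcone.apex r, 0) = x := by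
  obtain ⟨U, hU, hUS, e, hapex⟩ := h
  have hxU : x ∈ U := mem_of_mem_nhdsWithin hx hU
  have hex : e ⟨x, hxU⟩ = (Tcone.apex r, (e ⟨x, hxU⟩).2) := Prod.ext (Subtype.ext (hapex hxU)) rfl
  have hpre : (fun q ↦ (e.symm q : Euc N)) ⁻¹' W ∈ nhds (Tcone.apex r, (e ⟨x, hxU⟩).2) := by
    rw [← hex]
    refine (continuous_subtype_val.comp e.symm.continuous).continuousAt ?_
    simpa using hW
  obtain ⟨g, hg, hgapex, hgW⟩ := exists_isOpenEmbedding_Tcone_prod _ hpre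
  have hopen : Topology.IsOpenEmbedding (e.symm ∘ g) := e.symm.isOpenEmbedding.comp hg
  have hφx : (e.symm ∘ g) (Tcone.apex r, 0) = ⟨x, hxU⟩ := by
    rw [Function.comp_apply, hgapex, ← hex, e.symm_apply_apply]
  refine ⟨Subtype.val ∘ e.symm ∘ g, Topology.IsEmbedding.subtypeVal.comp hopen.isEmbedding, ?_,
    ?_, congrArg Subtype.val hφx⟩
  · have hmem : Set.range (e.symm ∘ g) ∈ nhds (⟨x, hxU⟩ : U) :=
      hopen.isOpen_range.mem_nhds ⟨_, hφx⟩
    rw [Set.range_comp]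
    refine nhdsWithin_le_of_mem hU ?_
    rw [← map_nhds_subtype_val ⟨x, hxU⟩]
    exact image_mem_map hmem
  · rintro _ ⟨q, rfl⟩
    exact ⟨hUS (e.symm (g q)).2, hgW q⟩

lemma congr_set (h : HasConeNbhd n r S x) (hx : x ∈ S) (hST : S =ᶠ[nhds x] T) :
    HasConeNbhd n r T x := by
  obtain ⟨φ, hφ, hrange, hsub, hφx⟩ := h.exists_isEmbedding hx hST
  rw [nhdsWithin_eq_iff_eventuallyEq.2 hST] at hrange
  exact of_isEmbedding hφ hrange (fun z hz ↦ (hsub hz).2.mp (hsub hz).1) hφx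

lemma image_homeomorph (h : HasConeNbhd n r S x) (f : Euc N ≃ₜ Euc N) :
    HasConeNbhd n r (f '' S) (f x) := by
  obtain ⟨U, hU, hUS, e, hapex⟩ := h
  refine ⟨f '' U, ?_, Set.image_mono hUS, (f.image U).symm.trans e, ?_⟩
  · rw [← f.isEmbedding.map_nhdsWithin_eq]
    exact image_mem_map hU
  · rintro ⟨u, hu, hux⟩
    obtain rfl := f.injective hux
    have hsymm : (f.image U).symm ⟨f u, Set.mem_image_of_mem f hu⟩ = ⟨u, hu⟩ :=
      (f.image U).symm_apply_apply ⟨u, hu⟩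
    simpa [hsymm] using hapex hu

lemma of_eventually_add_mem_iff (h : HasConeNbhd n r S x) (hx : x ∈ S)
    (hgerm : ∀ᶠ v in nhds (0 : Euc N), x + v ∈ S ↔ y + v ∈ S) : HasConeNbhd n r S y := by
  have himage := h.image_homeomorph (Homeomorph.addRight (y - x))
  have hxy : Homeomorph.addRight (y - x) x = y := add_sub_cancel x y
  rw [hxy] at himage
  refine himage.congr_set ⟨x, hx, hxy⟩ (eventuallyEq_set.2 ?_)
  have hlim : Tendsto (fun z ↦ z - y) (nhds y) (nhds 0) :=
    (continuous_id.sub continuous_const).tendsto' _ _ (sub_self y)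
  filter_upwards [hlim.eventually hgerm] with z hz
  have hsymm : (Homeomorph.addRight (y - x)).symm z = x + (z - y) :=
    (Homeomorph.symm_apply_eq _).2 (by rw [Homeomorph.coe_addRight]; module)
  rw [Homeomorph.image_eq_preimage_symm, Set.mem_preimage, hsymm, hz, add_sub_cancel]

end HasConeNbhd

end ConeNeighborhood

section StratificationRank

lemma IsSimplex.eventually_add_mem_convexHull_imp {s ρ : Finset (Euc N)} {x y : Euc N}
    (hs : IsSimplex s) (hρ : IsSimplex ρ) (hρs : ρ ⊆ s) (hx : x ∈ openSimplex ρ)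
    (hy : y ∈ openSimplex ρ) :
    ∀ᶠ v in nhds (0 : Euc N), x + v ∈ convexHull ℝ (s : Set (Euc N)) →
      y + v ∈ convexHull ℝ (s : Set (Euc N)) := by
  obtain ⟨-, hx_zero⟩ := hs.baryCoord_of_mem_openSimplex_face hρ hρs hx
  obtain ⟨hy_pos, hy_zero⟩ := hs.baryCoord_of_mem_openSimplex_face hρ hρs hy
  have hlim : Tendsto (fun v ↦ y + v) (nhds 0) (nhds y) :=
    (continuous_const.add continuous_id).tendsto' _ _ (add_zero y)
  have hpos : ∀ᶠ v in nhds (0 : Euc N), ∀ u ∈ ρ, 0 < baryCoord s u (y + v) :=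
    (Filter.eventually_all_finset ρ).2 fun u hu ↦ hlim.eventually <|
      (continuous_baryCoord s u).continuousAt.eventually (lt_mem_nhds (hy_pos u hu))
  have hspan : ∀ {z}, z ∈ openSimplex ρ → z ∈ affineSpan ℝ (s : Set (Euc N)) := fun hz ↦
    affineSpan_mono ℝ (Finset.coe_subset.2 hρs) (hρ.mem_openSimplex_iff.1 hz).1
  filter_upwards [hpos] with v hv hxv
  rw [hs.mem_convexHull_iff] at hxv ⊢
  refine ⟨?_, fun u hu ↦ ?_⟩
  · have hdir := AffineSubspace.vsub_mem_direction hxv.1 (hspan hx)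
    rw [vsub_eq_sub, add_sub_cancel_left] at hdir
    rw [add_comm]
    exact AffineSubspace.vadd_mem_of_mem_direction hdir (hspan hy)
  · by_cases huρ : u ∈ ρ
    · exact (hv u huρ).le
    · have hcoord : baryCoord s u (y + v) = baryCoord s u (x + v) := by
        rw [baryCoord_eq_linear_sub_add s u y, baryCoord_eq_linear_sub_add s u x (x + v),
          hx_zero u (Finset.mem_sdiff.2 ⟨hu, huρ⟩), hy_zero u (Finset.mem_sdiff.2 ⟨hu, huρ⟩),
          add_sub_cancel_left, add_sub_cancel_left]
      exact hcoord ▸ hxv.2 u hu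

lemma eventually_add_mem_space_imp {K : SimplicialComplex ℝ (Euc N)} (hfin : K.faces.Finite)
    {ρ : Finset (Euc N)} {x y : Euc N} (hρ : ρ ∈ K.faces) (hx : x ∈ openSimplex ρ)
    (hy : y ∈ openSimplex ρ) :
    ∀ᶠ v in nhds (0 : Euc N), x + v ∈ K.space → y + v ∈ K.space := by
  have hfaces : ∀ᶠ v in nhds (0 : Euc N), ∀ s ∈ K.faces, ρ ⊆ s →
      x + v ∈ convexHull ℝ (s : Set (Euc N)) → y + v ∈ convexHull ℝ (s : Set (Euc N)) :=
    hfin.eventually_all.2 fun s hs ↦ eventually_imp_distrib_left.2 fun hρs ↦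
      (isSimplex_of_mem_faces hs).eventually_add_mem_convexHull_imp (isSimplex_of_mem_faces hρ)
        hρs hx hy
  have hlim : Tendsto (fun v ↦ x + v) (nhds 0) (nhds x) :=
    (continuous_const.add continuous_id).tendsto' _ _ (add_zero x)
  filter_upwards [hfaces, hlim.eventually (eventually_forall_mem_convexHull_imp hfin x)]
    with v hv hxv hspace
  obtain ⟨s, hs, hmem⟩ := SimplicialComplex.mem_space_iff.1 hspace
  have hρs := subset_of_mem_openSimplex_of_mem_convexHull hρ hs hx (hxv s hs hmem)
  exact SimplicialComplex.mem_space_iff.2 ⟨s, hs, hv s hs hρs hmem⟩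

variable {K L : SimplicialComplex ℝ (Euc N)} {η ρ : Finset (Euc N)} {n r : ℕ} {x y : Euc N}

lemma mem_csetAux_of_mem_openSimplex (hfin : K.faces.Finite) (hρ : ρ ∈ K.faces)
    (hx : x ∈ openSimplex ρ) (hy : y ∈ openSimplex ρ) (h : x ∈ csetAux n K r) :
    y ∈ csetAux n K r := by
  refine ⟨SimplicialComplex.convexHull_subset_space hρ (intrinsicInterior_subset hy),
    h.2.of_eventually_add_mem_iff h.1 ?_⟩
  filter_upwards [eventually_add_mem_space_imp hfin hρ hx hy,
    eventually_add_mem_space_imp hfin hρ hy hx] with v hxy hyx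
  exact ⟨hxy, hyx⟩

lemma IsSubdivision.strRank_eq (hsub : IsSubdivision K L) (hfin : K.faces.Finite)
    (hη : η ∈ L.faces) (hρ : ρ ∈ K.faces) (hηρ : openSimplex η ⊆ openSimplex ρ) :
    strRank n L η = strRank n K ρ := by
  have hiff : ∀ r, openSimplex η ⊆ csetAux n L r ↔ openSimplex ρ ⊆ csetAux n K r := fun r ↦ by
    have hcentroid := (isSimplex_of_mem_faces hη).centroid_mem_openSimplex
    rw [csetAux, hsub.1]
    exact ⟨fun h y hy ↦ mem_csetAux_of_mem_openSimplex hfin hρ (hηρ hcentroid) hy (h hcentroid),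
      hηρ.trans⟩
  simp only [strRank, hiff]

end StratificationRank

section AscendingCurvature

variable {K L : SimplicialComplex ℝ (Euc N)} {τ ζ : Finset (Euc N)} {n : ℕ}

/-- The total solid angle along `τ`: the sum of `α(τ, σ)` over the `n`-simplices `σ` of `L`
having `τ` as a face. -/
def totalAngle (n : ℕ) (hfin : L.faces.Finite) (τ : Finset (Euc N)) : ℝ :=
  ∑ σ ∈ hfin.toFinset with τ ⊆ σ ∧ σ.card = n + 1, solidAngle τ σ

/-- The stratified Euler characteristic of the open star of `τ` in `L`: the sum of
`(-1) ^ dim η * r(η)` over the simplices `η` of `L` having `τ` as a face. The exponent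
`η.card + 1` has the parity of `dim η = η.card - 1`. -/
def starEuler (n : ℕ) (hfin : L.faces.Finite) (τ : Finset (Euc N)) : ℝ :=
  ∑ η ∈ hfin.toFinset with τ ⊆ η, (-1) ^ (η.card + 1) * strRank n L η

/-- The factor of the ascending stratified curvature `K_a(τ)` complementary to `a_p`, where
`p = dim τ`, expressed through invariants of the open star of `τ`. -/
def ascFactor (n : ℕ) (hfin : L.faces.Finite) (τ : Finset (Euc N)) : ℝ :=
  (strRank n L τ - (-1) ^ τ.card * starEuler n hfin τ -
    (1 - (-1) ^ n * (-1) ^ τ.card) * totalAngle n hfin τ) / 2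

lemma totalAngle_eq_sum_ite (hfin : L.faces.Finite) (τ : Finset (Euc N)) :
    totalAngle n hfin τ =
      ∑ η ∈ hfin.toFinset with τ ⊆ η, if η.card = n + 1 then solidAngle τ η else 0 := by
  rw [totalAngle, ← Finset.filter_filter, Finset.sum_filter]

lemma defect_eq_strRank_sub_totalAngle (hfin : L.faces.Finite) (η : Finset (Euc N)) :
    defect n L η = strRank n L η - totalAngle n hfin η := by
  have hset : nSimplicesOn n L η =
      (hfin.toFinset.filter (fun σ ↦ η ⊆ σ ∧ σ.card = n + 1) : Set (Finset (Euc N))) := by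
    ext σ
    simp [nSimplicesOn, and_comm]
  rw [defect, totalAngle, hset, finsum_mem_coe_finset]

lemma sum_neg_one_pow_mul_totalAngle (hfin : L.faces.Finite) (hτ : τ.Nonempty) :
    ∑ η ∈ hfin.toFinset with τ ⊆ η, (-1) ^ (η.card + τ.card) * totalAngle n hfin η =
      (-1) ^ (n + 1 + τ.card) * totalAngle n hfin τ := by
  simp only [totalAngle, Finset.mul_sum]
  rw [Finset.sum_comm' (t' := hfin.toFinset.filter (fun σ ↦ τ ⊆ σ ∧ σ.card = n + 1))
    (s' := fun σ ↦ σ.powerset.filter (τ ⊆ ·))]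
  · refine Finset.sum_congr rfl fun σ hσ ↦ ?_
    obtain ⟨hσL, hτσ, hcard⟩ := Finset.mem_filter.1 hσ
    rw [(isSimplex_of_mem_faces (hfin.mem_toFinset.1 hσL)).sum_neg_one_pow_mul_solidAngle hτ hτσ,
      hcard]
  · intro η σ
    simp only [Finset.mem_filter, hfin.mem_toFinset, Finset.mem_powerset]
    constructor
    · rintro ⟨⟨-, hτη⟩, hσ, hησ, hcard⟩
      exact ⟨⟨hησ, hτη⟩, hσ, hτη.trans hησ, hcard⟩
    · rintro ⟨⟨hησ, hτη⟩, hσ, -, hcard⟩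
      exact ⟨⟨L.down_closed hσ hησ (hτ.mono hτη), hτη⟩, hσ, hησ, hcard⟩

lemma sum_neg_one_pow_mul_defect (hfin : L.faces.Finite) (hτ : τ.Nonempty) :
    ∑ η ∈ hfin.toFinset with τ ⊆ η, (-1) ^ (η.card + τ.card) * defect n L η =
      (-1) ^ (τ.card + 1) * starEuler n hfin τ -
        (-1) ^ (n + 1 + τ.card) * totalAngle n hfin τ := by
  simp only [defect_eq_strRank_sub_totalAngle hfin, mul_sub, Finset.sum_sub_distrib]
  rw [sum_neg_one_pow_mul_totalAngle hfin hτ, starEuler, Finset.mul_sum]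
  congr 1
  exact Finset.sum_congr rfl fun η _ ↦ by ring

lemma sum_Icc_neg_one_pow_mul_finsum (hfin : L.faces.Finite)
    (hcard : ∀ η ∈ L.faces, η.card ≤ n + 1) (hτ : τ.Nonempty) (f : Finset (Euc N) → ℝ) :
    ∑ i ∈ Finset.Icc τ.card n, (-1) ^ (i - (τ.card - 1)) *
        ∑ᶠ η ∈ {η | η ∈ L.faces ∧ η.card = i + 1 ∧ τ ⊆ η}, f η =
      ∑ η ∈ hfin.toFinset with τ ⊂ η, (-1) ^ (η.card + τ.card) * f η := by
  have hpos := hτ.card_pos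
  rw [← Finset.sum_fiberwise_of_maps_to (t := Finset.Icc τ.card n)
    (g := fun η : Finset (Euc N) ↦ η.card - 1)]
  · refine Finset.sum_congr rfl fun i hi ↦ ?_
    have hle := (Finset.mem_Icc.1 hi).1
    have hset : {η | η ∈ L.faces ∧ η.card = i + 1 ∧ τ ⊆ η} =
        ((hfin.toFinset.filter (τ ⊂ ·)).filter (fun η ↦ η.card - 1 = i) :
          Set (Finset (Euc N))) := by
      ext η
      simp only [Set.mem_ofPred_eq, Finset.coe_filter, Finset.mem_filter, hfin.mem_toFinset]
      constructor
      · rintro ⟨hη, hηcard, hτη⟩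
        exact ⟨⟨hη, hτη.ssubset_of_ne (by rintro rfl; omega)⟩, by omega⟩
      · rintro ⟨⟨hη, hτη⟩, hηcard⟩
        have := Finset.card_lt_card hτη
        exact ⟨hη, by omega, hτη.subset⟩
    rw [hset, finsum_mem_coe_finset, Finset.mul_sum]
    refine Finset.sum_congr rfl fun η hη ↦ ?_
    obtain ⟨hη, hηcard⟩ := Finset.mem_filter.1 hη
    have := Finset.card_lt_card (Finset.mem_filter.1 hη).2
    rw [show η.card + τ.card = i - (τ.card - 1) + 2 * τ.card by omega, pow_add,
      (even_two_mul τ.card).neg_one_pow, mul_one]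
  · intro η hη
    obtain ⟨hηL, hτη⟩ := Finset.mem_filter.1 hη
    have := Finset.card_lt_card hτη
    have := hcard η (hfin.mem_toFinset.1 hηL)
    rw [Finset.mem_Icc]
    omega

lemma asc_eq_ads_mul_ascFactor (hfin : L.faces.Finite) (hcard : ∀ η ∈ L.faces, η.card ≤ n + 1)
    (hτ : τ ∈ L.faces) : asc n L τ = ads (τ.card - 1) * ascFactor n hfin τ := by
  have hτne := (isSimplex_of_mem_faces hτ).nonempty
  have hstar : hfin.toFinset.filter (τ ⊆ ·) = insert τ (hfin.toFinset.filter (τ ⊂ ·)) := by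
    ext η
    simp only [Finset.mem_filter, Finset.mem_insert, hfin.mem_toFinset]
    constructor
    · rintro ⟨hη, hτη⟩
      exact (eq_or_ne η τ).imp id fun hne ↦ ⟨hη, hτη.ssubset_of_ne hne.symm⟩
    · rintro (rfl | ⟨hη, hτη⟩)
      exacts [⟨hτ, subset_rfl⟩, ⟨hη, hτη.subset⟩]
  have hsum := sum_neg_one_pow_mul_defect (n := n) hfin hτne
  rw [hstar, Finset.sum_insert (by simp), (Even.add_self τ.card).neg_one_pow, one_mul,
    ← eq_sub_iff_add_eq'] at hsum
  rw [asc, sum_Icc_neg_one_pow_mul_finsum hfin hcard hτne, hsum,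
    defect_eq_strRank_sub_totalAngle hfin, ascFactor]
  ring

lemma ads_eq_zero_of_odd {m : ℕ} (hm : Odd m) : ads m = 0 := by
  rw [ads, bernoulli_eq_zero_of_odd (hm.add_even even_two) (by omega), mul_zero, zero_mul,
    zero_div]

namespace IsSubdivision

lemma card_le_of_mem_faces (hsub : IsSubdivision K L) (hcard : ∀ ρ ∈ K.faces, ρ.card ≤ n + 1)
    {η : Finset (Euc N)} (hη : η ∈ L.faces) : η.card ≤ n + 1 := by
  obtain ⟨ρ, hρ, hηρ⟩ := hsub.2 η hη
  exact ((isSimplex_of_mem_faces hη).card_le_of_openSimplex_subset (isSimplex_of_mem_faces hρ)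
    hηρ).trans (hcard ρ hρ)

lemma sum_star_eq_sum_starIn (hsub : IsSubdivision K L) (hKfin : K.faces.Finite)
    (hLfin : L.faces.Finite) (hτ : τ ∈ L.faces) (hζ : ζ ∈ K.faces)
    (hτζ : openSimplex τ ⊆ openSimplex ζ) (f : Finset (Euc N) → ℝ) :
    ∑ η ∈ hLfin.toFinset with τ ⊆ η, f η =
      ∑ ρ ∈ hKfin.toFinset with ζ ⊆ ρ, ∑ η ∈ hLfin.toFinset with η ∈ starIn L τ ρ, f η := by
  rw [← Finset.sum_biUnion]
  · refine Finset.sum_congr (Finset.ext fun η ↦ ?_) fun _ _ ↦ rfl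
    simp only [Finset.mem_biUnion, Finset.mem_filter, hKfin.mem_toFinset, hLfin.mem_toFinset]
    constructor
    · rintro ⟨hη, hτη⟩
      obtain ⟨ρ, hρ, hηρ⟩ := hsub.2 η hη
      exact ⟨ρ, ⟨hρ, subset_of_openSimplex_subset hζ hρ (isSimplex_of_mem_faces hτ)
        (isSimplex_of_mem_faces hη) hτζ hτη hηρ⟩, hη, hη, hτη, hηρ⟩
    · rintro ⟨-, -, hη, -, hτη, -⟩
      exact ⟨hη, hτη⟩
  · intro ρ hρ ρ' hρ' hne
    refine Finset.disjoint_left.2 fun η hη hη' ↦ hne ?_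
    obtain ⟨hηL, -, hηρ⟩ := (mem_filter_starIn hLfin).1 hη
    obtain ⟨-, -, hηρ'⟩ := (mem_filter_starIn hLfin).1 hη'
    have hcentroid := (isSimplex_of_mem_faces hηL).centroid_mem_openSimplex
    exact eq_of_mem_openSimplex (hKfin.mem_toFinset.1 (Finset.mem_filter.1 hρ).1)
      (hKfin.mem_toFinset.1 (Finset.mem_filter.1 hρ').1) (hηρ hcentroid) (hηρ' hcentroid)

lemma starEuler_eq (hsub : IsSubdivision K L) (hKfin : K.faces.Finite) (hLfin : L.faces.Finite)
    (hτ : τ ∈ L.faces) (hζ : ζ ∈ K.faces) (hτζ : openSimplex τ ⊆ openSimplex ζ) :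
    starEuler n hLfin τ = starEuler n hKfin ζ := by
  have hcentroid := (isSimplex_of_mem_faces hτ).centroid_mem_openSimplex
  rw [starEuler, starEuler, hsub.sum_star_eq_sum_starIn hKfin hLfin hτ hζ hτζ]
  refine Finset.sum_congr rfl fun ρ hρ ↦ ?_
  obtain ⟨hρK, hζρ⟩ := Finset.mem_filter.1 hρ
  rw [hKfin.mem_toFinset] at hρK
  rw [← hsub.sum_starIn_neg_one_pow hLfin hτ hρK hcentroid (convexHull_mono
    (Finset.coe_subset.2 hζρ) (intrinsicInterior_subset (hτζ hcentroid))), Finset.sum_mul]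
  refine Finset.sum_congr rfl fun η hη ↦ ?_
  obtain ⟨hηL, -, hηρ⟩ := (mem_filter_starIn hLfin).1 hη
  rw [hsub.strRank_eq hKfin hηL hρK hηρ]

lemma totalAngle_eq (hsub : IsSubdivision K L) (hKfin : K.faces.Finite)
    (hLfin : L.faces.Finite) (hcard : ∀ ρ ∈ K.faces, ρ.card ≤ n + 1) (hτ : τ ∈ L.faces)
    (hζ : ζ ∈ K.faces) (hτζ : openSimplex τ ⊆ openSimplex ζ) :
    totalAngle n hLfin τ = totalAngle n hKfin ζ := by
  rw [totalAngle_eq_sum_ite, totalAngle_eq_sum_ite,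
    hsub.sum_star_eq_sum_starIn hKfin hLfin hτ hζ hτζ]
  refine Finset.sum_congr rfl fun ρ hρ ↦ ?_
  obtain ⟨hρK, hζρ⟩ := Finset.mem_filter.1 hρ
  rw [hKfin.mem_toFinset] at hρK
  rw [← Finset.sum_filter, Finset.filter_filter]
  split_ifs with hdim
  · rw [hsub.solidAngle_eq_sum_starIn hLfin hτ hζ hρK hτζ hζρ, hdim]
  · refine Finset.sum_eq_zero fun η hη ↦ absurd ?_ hdim
    obtain ⟨-, ⟨hηL, -, hηρ⟩, hηcard⟩ := Finset.mem_filter.1 hη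
    exact (hcard ρ hρK).antisymm <| hηcard.symm.trans_le <|
      (isSimplex_of_mem_faces hηL).card_le_of_openSimplex_subset (isSimplex_of_mem_faces hρK) hηρ

lemma ascFactor_eq (hsub : IsSubdivision K L) (hKfin : K.faces.Finite) (hLfin : L.faces.Finite)
    (hcard : ∀ ρ ∈ K.faces, ρ.card ≤ n + 1) (hτ : τ ∈ L.faces) (hζ : ζ ∈ K.faces)
    (hτζ : openSimplex τ ⊆ openSimplex ζ) (hparity : Even τ.card ↔ Even ζ.card) :
    ascFactor n hLfin τ = ascFactor n hKfin ζ := by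
  have hsign : (-1 : ℝ) ^ τ.card = (-1) ^ ζ.card := neg_one_pow_congr hparity
  rw [ascFactor, ascFactor, hsub.strRank_eq hKfin hτ hζ hτζ,
    hsub.starEuler_eq hKfin hLfin hτ hζ hτζ, hsub.totalAngle_eq hKfin hLfin hcard hτ hζ hτζ, hsign]

end IsSubdivision

end AscendingCurvature

/-- Subdivision invariance of ascending stratified curvature: if `L` is a
subdivision of the finite `n`-dimensional complex `K` (`n ≥ 2`), `τ` is an
`s`-simplex of `L` whose open simplex is contained in the open `p`-simplex `ζ`
of `K`, then `a_p K_a(τ) = a_s K_a(ζ)`; in particular if `s = p` then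
`K_a(τ) = K_a(ζ)`. -/
theorem asc_subdivision {N n s p : ℕ} (hn : 2 ≤ n)
    (K L : SimplicialComplex ℝ (Euc N))
    (hKfin : K.faces.Finite) (hLfin : L.faces.Finite) (hdim : IsNDim n K)
    (hsub : IsSubdivision K L)
    (τ ζ : Finset (Euc N)) (hτ : τ ∈ L.faces) (hζ : ζ ∈ K.faces)
    (hτcard : τ.card = s + 1) (hζcard : ζ.card = p + 1)
    (hcont : openSimplex τ ⊆ openSimplex ζ) :
    (ads p : ℝ) * asc n L τ = (ads s : ℝ) * asc n K ζ ∧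
      (s = p → asc n L τ = asc n K ζ) := by
  have hfactor : (Even s ↔ Even p) → ascFactor n hLfin τ = ascFactor n hKfin ζ := fun hpar ↦
    hsub.ascFactor_eq hKfin hLfin hdim.1 hτ hζ hcont <| by
      rw [hτcard, hζcard, Nat.even_add_one, Nat.even_add_one, hpar]
  rw [asc_eq_ads_mul_ascFactor hLfin (fun _ ↦ hsub.card_le_of_mem_faces hdim.1) hτ,
    asc_eq_ads_mul_ascFactor hKfin hdim.1 hζ, hτcard, hζcard, Nat.add_sub_cancel,
    Nat.add_sub_cancel]
  refine ⟨?_, fun hsp ↦ by rw [hsp, hfactor (by rw [hsp])]⟩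
  by_cases hpar : Even s ↔ Even p
  · rw [hfactor hpar]
    ring
  · have hodd : Odd s ∨ Odd p := by grind
    rcases hodd with hs | hp
    · simp [ads_eq_zero_of_odd hs]
    · simp [ads_eq_zero_of_odd hp]

end AngleDefectPaper
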